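/- Let G be a 2-connected subgraph of Q_n and a, b distinct vertices of G with every vertex z ∉ {a,b} of degree at least d in G. If G is not isomorphic to Q_d with a and b at even Hamming distance, then G contains an a–b path of length at least 2^d - 1. -/

import Mathlib

def hypercube (n : ℕ) : SimpleGraph (Fin n → Bool) :=
  SimpleGraph.fromRel (fun x y => hammingDist x y = 1)

def TwoConnected {V : Type*} (H : SimpleGraph V) : Prop :=
  (∃ x y z : V, x ≠ y ∧ x ≠ z ∧ y ≠ z) ∧
  ∀ v : V, ((⊤ : H.Subgraph).deleteVerts {v}).coe.Connected

set_option linter.unusedVariables false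
set_option linter.unusedSectionVars false
namespace HC
variable {V : Type*} {G : SimpleGraph V}

/-- path of exact length inside a set -/
inductive P (G : SimpleGraph V) : Set V → V → V → ℕ → Prop
  | nil {S : Set V} {a : V} (h : a ∈ S) : P G S a a 0
  | cons {S : Set V} {a b c : V} {k : ℕ} (h : a ∈ S) (e : G.Adj a b)
      (p : P G (S \ {a}) b c k) : P G S a c (k + 1)

def LP (G : SimpleGraph V) (S : Set V) (a b : V) (k : ℕ) : Prop := ∃ m, k ≤ m ∧ P G S a b m

abbrev Conn (G : SimpleGraph V) (S : Set V) (a b : V) : Prop := LP G S a b 0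

theorem P.left {S : Set V} {a b : V} {k : ℕ} (h : P G S a b k) : a ∈ S := by
  cases h <;> assumption

theorem P.right {S : Set V} {a b : V} {k : ℕ} (h : P G S a b k) : b ∈ S := by
  induction h with
  | nil h => exact h
  | cons h e p ih => exact ih.1

theorem P.mono {S T : Set V} {a b : V} {k : ℕ} (h : P G S a b k) (hST : S ⊆ T) : P G T a b k := by
  induction h generalizing T with
  | nil h => exact .nil (hST h)
  | cons h e p ih => exact .cons (hST h) e (ih (Set.sdiff_subset_sdiff_left hST))

theorem P.gmono {G' : SimpleGraph V} {S : Set V} {a b : V} {k : ℕ} (h : P G S a b k)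
    (hg : ∀ x ∈ S, ∀ y ∈ S, G.Adj x y → G'.Adj x y) : P G' S a b k := by
  induction h with
  | nil h => exact .nil h
  | cons h e p ih =>
    exact .cons h (hg _ h _ p.left.1 e) (ih fun x hx y hy => hg x hx.1 y hy.1)

theorem P.glue {S T : Set V} {a b c : V} {k l : ℕ} (h : P G S a b k) (h' : P G T b c l)
    (hST : ∀ x ∈ S, x ∈ T → x = b) : P G (S ∪ T) a c (k + l) := by
  induction h with
  | nil h => rw [Nat.zero_add]; exact h'.mono Set.subset_union_right
  | @cons S a b c' k h e p ih =>
    have := ih h' (fun x hx hT => hST x hx.1 hT)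
    rw [show k + 1 + l = (k + l) + 1 by omega]
    refine .cons (Or.inl h) e (this.mono ?_)
    rintro x (hx | hx)
    · exact ⟨Or.inl hx.1, hx.2⟩
    · refine ⟨Or.inr hx, ?_⟩
      rintro rfl
      exact p.right.2 (hST _ h hx).symm

theorem P.symm {S : Set V} {a b : V} {k : ℕ} (h : P G S a b k) : P G S b a k := by
  induction h with
  | nil h => exact .nil h
  | @cons S a b c k h e p ih =>
    have h2 : P G {b, a} b a 1 := .cons (by simp) e.symm (.nil (by simp [e.ne]))
    refine (ih.glue h2 ?_).mono ?_
    · rintro x hx (rfl | rfl)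
      · rfl
      · exact absurd rfl hx.2
    · rintro x (hx | rfl | rfl)
      · exact hx.1
      · exact p.left.1
      · exact h

theorem P.split {S : Set V} {a b : V} {k : ℕ} (h : P G S a b k) (u : V) (hu : u ∈ S) :
    (∃ j, P G S u b j) ∨ P G (S \ {u}) a b k := by
  induction h with
  | @nil S a h =>
    by_cases hua : u = a
    · left; subst hua; exact ⟨0, .nil h⟩
    · right; exact .nil ⟨h, fun h => hua h.symm⟩
  | @cons S a b c k h e p ih =>
    by_cases hua : u = a
    · left; subst hua; exact ⟨_, .cons h e p⟩
    · rcases ih ⟨hu, hua⟩ with ⟨j, hj⟩ | h'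
      · exact Or.inl ⟨j, hj.mono Set.sdiff_subset⟩
      · right
        refine .cons ⟨h, fun h => hua h.symm⟩ e (h'.mono ?_)
        intro x hx; exact ⟨⟨hx.1.1, hx.2⟩, hx.1.2⟩

variable {S T : Set V} {a b c u v w x y z : V} {k l : ℕ}

theorem LP.left (h : LP G S a b k) : a ∈ S := by obtain ⟨m, _, h⟩ := h; exact h.left
theorem LP.right (h : LP G S a b k) : b ∈ S := by obtain ⟨m, _, h⟩ := h; exact h.right
theorem LP.refl (h : a ∈ S) : LP G S a a 0 := ⟨0, le_rfl, .nil h⟩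
theorem LP.mono (h : LP G S a b k) (hST : S ⊆ T) : LP G T a b k := by
  obtain ⟨m, hm, h⟩ := h; exact ⟨m, hm, h.mono hST⟩
theorem LP.gmono {G' : SimpleGraph V} (h : LP G S a b k)
    (hg : ∀ x ∈ S, ∀ y ∈ S, G.Adj x y → G'.Adj x y) : LP G' S a b k := by
  obtain ⟨m, hm, h⟩ := h; exact ⟨m, hm, h.gmono hg⟩
theorem LP.le (h : LP G S a b k) (hk : l ≤ k) : LP G S a b l := by
  obtain ⟨m, hm, h⟩ := h; exact ⟨m, hk.trans hm, h⟩
theorem LP.conn (h : LP G S a b k) : Conn G S a b := h.le (Nat.zero_le _)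
theorem LP.symm (h : LP G S a b k) : LP G S b a k := by
  obtain ⟨m, hm, h⟩ := h; exact ⟨m, hm, h.symm⟩
theorem LP.glue (h : LP G S a b k) (h' : LP G T b c l)
    (hST : ∀ x ∈ S, x ∈ T → x = b) : LP G (S ∪ T) a c (k + l) := by
  obtain ⟨m, hm, h⟩ := h
  obtain ⟨m', hm', h'⟩ := h'
  exact ⟨m + m', by omega, h.glue h' hST⟩
theorem LP.cons (ha : a ∉ S) (e : G.Adj a b) (h : LP G S b c k) : LP G (insert a S) a c (k + 1) := by
  obtain ⟨m, hm, h⟩ := h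
  refine ⟨m + 1, by omega, .cons (by simp) e (h.mono ?_)⟩
  intro x hx; exact ⟨Or.inr hx, fun h => ha (h ▸ hx)⟩
theorem LP.edge (h : LP G S a b k) (e : G.Adj b c) (h' : LP G T c x l)
    (hST : ∀ x ∈ S, x ∉ T) : LP G (S ∪ T) a x (k + 1 + l) := by
  have h1 := LP.cons (hST b h.right) e h'
  have := h.glue h1 (by
    rintro x hx (rfl | hx')
    · rfl
    · exact absurd hx' (hST x hx))
  rw [show k + 1 + l = k + (l + 1) by omega]
  refine this.mono ?_
  rintro x (hx | rfl | hx)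
  · exact Or.inl hx
  · exact Or.inl h.right
  · exact Or.inr hx
theorem LP.one (h : LP G S a b k) (hab : a ≠ b) : LP G S a b 1 := by
  obtain ⟨m, hm, h⟩ := h
  refine ⟨m, ?_, h⟩
  cases h with
  | nil => exact absurd rfl hab
  | cons => omega

theorem LP.step (hu : u ∈ S) (e : G.Adj u v) (h : Conn G S v w) : Conn G S u w := by
  obtain ⟨m, hm, h⟩ := h
  rcases h.split u hu with ⟨j, hj⟩ | h
  · exact ⟨j, Nat.zero_le _, hj⟩
  · exact ⟨_, Nat.zero_le _, .cons hu e h⟩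

theorem LP.trans (h : Conn G S u v) (h' : Conn G S v w) : Conn G S u w := by
  obtain ⟨m, hm, h⟩ := h
  clear hm
  induction h with
  | nil h => exact h'
  | @cons S a b c k h e p ih =>
    have : ∀ {S : Set V} {a b : V} {k : ℕ} , P G S a b k → ∀ T, S ⊆ T → Conn G T b w → Conn G T a w := by
      intro S a b k p
      induction p with
      | nil h => intro T _ h; exact h
      | cons h e p ih =>
        intro T hT hc
        exact LP.step (hT h) e (ih T (Set.sdiff_subset.trans hT) hc)
    exact this (.cons h e p) S le_rfl h'

theorem LP.adj (hu : u ∈ S) (hv : v ∈ S) (e : G.Adj u v) : Conn G S u v :=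
  LP.step hu e (LP.refl hv)

theorem LP.snoc (h : Conn G S u v) (e : G.Adj v w) (hw : w ∈ S) : Conn G S u w :=
  h.trans (LP.adj h.right hw e)

/-- closed set induction -/
theorem LP.closed (h : Conn G S u v) (A : Set V) (hu : u ∈ A)
    (hA : ∀ x ∈ A, x ∈ S → ∀ y ∈ S, G.Adj x y → y ∈ A) : v ∈ A := by
  obtain ⟨m, hm, h⟩ := h
  clear hm
  induction h with
  | nil h => exact hu
  | @cons S a b c k h e p ih =>
    exact ih (hA a hu h b p.left.1 e) (fun x hx hxS y hy => hA x hx hxS.1 y hy.1)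

theorem LP.cross (h : Conn G S u v) (A : Set V) (hu : u ∈ A) (hv : v ∉ A) :
    ∃ x ∈ A, x ∈ S ∧ ∃ y ∈ S, y ∉ A ∧ G.Adj x y := by
  by_contra hc
  push Not at hc
  exact hv (h.closed A hu (fun x hx hxS y hy e => by
    by_contra hyA; exact hc x hx hxS y hy hyA e))

def reach (G : SimpleGraph V) (S : Set V) (u : V) : Set V := {v | Conn G S u v}

theorem reach_sub : reach G S u ⊆ S := fun v h => LP.right h

theorem reach_self (h : u ∈ S) : u ∈ reach G S u := LP.refl h

theorem reach_conn (h : v ∈ reach G S u) : Conn G (reach G S u) u v := by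
  have h0 : Conn G S u v := h
  refine h0.closed {z | Conn G (reach G S u) u z} (LP.refl (reach_self h0.left)) ?_
  intro x hx hxS y hy e
  exact LP.snoc hx e (LP.snoc (reach_sub.elim_conn hx) e hy)
  where reach_sub.elim_conn {x : V} (hx : Conn G (reach G S u) u x) : Conn G S u x := hx.mono reach_sub

theorem reach_closed (hx : x ∈ reach G S u) (hy : y ∈ S) (e : G.Adj x y) : y ∈ reach G S u :=
  LP.snoc hx e hy

/-- connected set -/
def Cn (G : SimpleGraph V) (S : Set V) : Prop := ∀ u ∈ S, ∀ v ∈ S, Conn G S u v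

theorem reach_Cn : Cn G (reach G S u) := fun x hx y hy => (reach_conn hx).symm.trans (reach_conn hy)

theorem Cn.of_root (r : V) (h : ∀ z ∈ S, Conn G S z r) : Cn G S :=
  fun x hx y hy => (h x hx).trans (h y hy).symm

theorem Cn.sub_reach (hT : Cn G T) (hTS : T ⊆ S) (hu : u ∈ T) : T ⊆ reach G S u :=
  fun v hv => (hT u hu v hv).mono hTS

theorem LP.trim (h : Conn G S u w) : ∃ T ⊆ S, Conn G T u w ∧ ∀ z ∈ T, z ≠ w → Conn G (T \ {w}) u z := by
  by_cases huw : u = w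
  · subst huw
    refine ⟨{u}, by simpa using h.left, LP.refl rfl, ?_⟩
    intro z hz hzw; exact absurd hz hzw
  · refine ⟨insert w (reach G (S \ {w}) u), ?_, ?_, ?_⟩
    · rintro z (rfl | hz)
      · exact h.right
      · exact (reach_sub hz).1
    · obtain ⟨x, hx, hxS, y, hyS, hyA, e⟩ := h.cross (reach G (S \ {w}) u) (reach_self ⟨h.left, huw⟩)
        (fun h => (reach_sub h).2 rfl)
      have : y = w := by
        by_contra hyw
        exact hyA (reach_closed hx ⟨hyS, hyw⟩ e)
      subst this
      exact LP.snoc ((reach_conn hx).mono (Set.subset_insert _ _)) e (Set.mem_insert _ _)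
    · rintro z (rfl | hz) hzw
      · exact absurd rfl hzw
      · refine (reach_conn hz).mono ?_
        intro t ht
        exact ⟨Or.inr ht, (reach_sub ht).2⟩
end HC

set_option linter.unusedVariables false
namespace HC
variable {V : Type*} {G : SimpleGraph V}

def DP (G : SimpleGraph V) (A B : Set V) : Prop :=
  ∃ p ∈ A, ∃ q ∈ A, ∃ r ∈ B, ∃ t ∈ B, ∃ S1 S2 : Set V, Disjoint S1 S2 ∧ Conn G S1 p r ∧ Conn G S2 q t

def UB (G : SimpleGraph V) (A B : Set V) : Prop :=
  ∀ s, ∃ u ∈ A, ∃ v ∈ B, Conn G {s}ᶜ u v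

theorem UB.symm {A B : Set V} (h : UB G A B) : UB G B A := by
  intro s; obtain ⟨u, hu, v, hv, hc⟩ := h s; exact ⟨v, hv, u, hu, hc.symm⟩

theorem DP.symm {A B : Set V} (h : DP G A B) : DP G B A := by
  obtain ⟨p, hp, q, hq, r, hr, t, ht, S1, S2, hd, h1, h2⟩ := h
  exact ⟨r, hr, t, ht, p, hp, q, hq, S1, S2, hd, h1.symm, h2.symm⟩

/-- In G' = G minus edge xy, w blocks; x on the A side, y not -/
theorem menger_side {G G' : SimpleGraph V} {A B : Set V} {x y w : V}
    (hG : ∀ p q, G.Adj p q → G'.Adj p q ∨ (p = x ∧ q = y) ∨ (p = y ∧ q = x))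
    (hub : UB G A B) (hw : ∀ u ∈ A, ∀ v ∈ B, ¬ Conn G' {w}ᶜ u v)
    (hx : ∃ u ∈ A, Conn G' {w}ᶜ u x) (hy : ∀ u ∈ A, ¬ Conn G' {w}ᶜ u y) :
    UB G' A {w, x} := by
  intro s
  by_cases hsw : s = w
  · subst hsw
    obtain ⟨u, hu, hc⟩ := hx
    exact ⟨u, hu, x, by simp, hc⟩
  obtain ⟨u, hu, v, hv, hc⟩ := hub s
  by_cases h1 : Conn G' {s}ᶜ u w
  · exact ⟨u, hu, w, by simp, h1⟩
  by_cases h2 : Conn G' {s}ᶜ u x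
  · exact ⟨u, hu, x, by simp, h2⟩
  exfalso
  have key : ∀ z ∈ reach G' {s}ᶜ u, Conn G' {w}ᶜ u z := by
    intro z hz
    refine (reach_conn hz).mono ?_
    intro t ht htw
    exact h1 (htw ▸ ht)
  have : v ∈ reach G' {s}ᶜ u := by
    refine hc.closed _ (reach_self hc.left) ?_
    intro p hp hps q hq e
    rcases hG p q e with e | ⟨rfl, rfl⟩ | ⟨rfl, rfl⟩
    · exact reach_closed hp hq e
    · exact absurd hp h2
    · exact absurd (key _ hp) (hy u hu)
  exact hw u hu v hv (key v this)

theorem menger_aux [Finite V] [Nonempty V] (N : ℕ) : ∀ (G : SimpleGraph V) (A B : Set V), G.edgeSet.ncard ≤ N → UB G A B →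
    DP G A B := by
  induction N with
  | zero =>
    intro G A B hN hub
    have hne : ∀ x y, ¬ G.Adj x y := by
      intro x y e
      have : G.edgeSet = ∅ := (Set.ncard_eq_zero (Set.toFinite _)).1 (by omega)
      have h2 : s(x, y) ∈ G.edgeSet := e
      rw [this] at h2; exact h2
    have hc : ∀ {S u v}, Conn G S u v → u = v := by
      rintro S u v ⟨m, _, h⟩
      cases h with
      | nil => rfl
      | cons _ e => exact absurd e (hne _ _)
    · obtain ⟨s⟩ := ‹Nonempty V›
      obtain ⟨u, hu, v, hv, h⟩ := hub s
      obtain rfl := hc h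
      obtain ⟨u', hu', v', hv', h'⟩ := hub u
      obtain rfl := hc h'
      refine ⟨u, hu, u', hu', u, hv, u', hv', {u}, {u'}, ?_, LP.refl rfl, LP.refl rfl⟩
      rw [Set.disjoint_singleton]
      exact fun h => h'.left h.symm
  | succ N ih =>
    intro G A B hN hub
    by_cases hE : ∃ x y, G.Adj x y
    swap
    · apply ih G A B _ hub
      have : G.edgeSet = ∅ := by
        ext e
        induction e with
        | _ x y => simp only [SimpleGraph.mem_edgeSet, Set.mem_empty_iff_false, iff_false]; exact fun h => hE ⟨x, y, h⟩
      rw [this]; simp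
    obtain ⟨x0, y0, e0⟩ := hE
    set G' := G.deleteEdges {s(x0, y0)} with hG'
    have hle : ∀ p q, G'.Adj p q → G.Adj p q := fun p q h => SimpleGraph.deleteEdges_le _ h
    have hN' : G'.edgeSet.ncard ≤ N := by
      have : G'.edgeSet ⊂ G.edgeSet := by
        refine ⟨SimpleGraph.edgeSet_mono (SimpleGraph.deleteEdges_le _), ?_⟩
        intro h
        have := h (show s(x0, y0) ∈ G.edgeSet from e0)
        simp [hG'] at this
      have := Set.ncard_lt_ncard this (Set.toFinite _)
      omega
    have mono : ∀ {S u v}, Conn G' S u v → Conn G S u v := fun h => h.gmono (fun x _ y _ => hle x y)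
    by_cases hub' : UB G' A B
    · obtain ⟨p, hp, q, hq, r, hr, t, ht, S1, S2, hd, h1, h2⟩ := ih G' A B hN' hub'
      exact ⟨p, hp, q, hq, r, hr, t, ht, S1, S2, hd, mono h1, mono h2⟩
    have hG0 : ∀ p q, G.Adj p q → G'.Adj p q ∨ (p = x0 ∧ q = y0) ∨ (p = y0 ∧ q = x0) := by
      intro p q e
      by_cases h : s(p, q) = s(x0, y0)
      · right; simpa using h
      · left; simp only [hG', SimpleGraph.deleteEdges_adj, Set.mem_singleton_iff]; exact ⟨e, h⟩
    unfold UB at hub'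
    push Not at hub'
    obtain ⟨w, hw⟩ := hub'
    obtain ⟨u, hu, v, hv, hc⟩ := hub w
    -- crossing edge
    have hcr : ∃ x y, G.Adj x y ∧ (∀ p q, G.Adj p q → G'.Adj p q ∨ (p = x ∧ q = y) ∨ (p = y ∧ q = x)) ∧
        (∃ u ∈ A, Conn G' {w}ᶜ u x) ∧ (∀ u ∈ A, ¬ Conn G' {w}ᶜ u y) := by
      obtain ⟨x, hx, hxS, y, hyS, hyA, e⟩ := hc.cross {z | ∃ u ∈ A, Conn G' {w}ᶜ u z} ⟨u, hu, LP.refl hc.left⟩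
        (by rintro ⟨u', hu', h⟩; exact hw u' hu' v hv h)
      refine ⟨x, y, e, ?_, hx, ?_⟩
      · rcases hG0 x y e with h | ⟨rfl, rfl⟩ | ⟨rfl, rfl⟩
        · exfalso; obtain ⟨u, hu, hx⟩ := hx
          exact hyA ⟨u, hu, hx.snoc h hyS⟩
        · exact hG0
        · intro p q e; rcases hG0 p q e with h | h | h
          · exact Or.inl h
          · exact Or.inr (Or.inr h)
          · exact Or.inr (Or.inl h)
      · intro u hu h; exact hyA ⟨u, hu, h⟩
    obtain ⟨x, y, e, hG, hx, hy⟩ := hcr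
    have hxB : ∀ v ∈ B, ¬ Conn G' {w}ᶜ v x := by
      intro v hv h
      obtain ⟨u, hu, hx⟩ := hx
      exact hw u hu v hv (hx.trans h.symm)
    have hyB : ∃ v ∈ B, Conn G' {w}ᶜ v y := by
      obtain ⟨p, hp, hpS, q, hqS, hqA, e⟩ := hc.symm.cross {z | ∃ u ∈ B, Conn G' {w}ᶜ u z} ⟨v, hv, LP.refl hc.right⟩
        (by rintro ⟨u', hu', h⟩; exact hw u hu u' hu' h.symm)
      obtain ⟨v', hv', hp⟩ := hp
      rcases hG p q e with h | ⟨rfl, rfl⟩ | ⟨rfl, rfl⟩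
      · exact absurd ⟨v', hv', hp.snoc h hqS⟩ hqA
      · exact absurd hp (hxB v' hv')
      · exact ⟨v', hv', hp⟩
    have hGs : ∀ p q, G.Adj p q → G'.Adj p q ∨ (p = y ∧ q = x) ∨ (p = x ∧ q = y) := fun p q e => by
      rcases hG p q e with h | h | h
      · exact Or.inl h
      · exact Or.inr (Or.inr h)
      · exact Or.inr (Or.inl h)
    have side : ∀ (A B : Set V) (x y : V), DP G' A {w, x} → ∃ p ∈ A, ∃ q ∈ A, ∃ S1 S2 : Set V, Disjoint S1 S2 ∧
        Conn G' S1 p w ∧ Conn G' S2 q x ∧ ∀ z ∈ S1 ∪ S2, z ≠ w → ∃ u ∈ A, Conn G' {w}ᶜ u z := by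
      intro A B x y hdp
      have gen : ∃ p ∈ A, ∃ q ∈ A, ∃ S1 S2 : Set V, Disjoint S1 S2 ∧ Conn G' S1 p w ∧ Conn G' S2 q x := by
        obtain ⟨p, hp, q, hq, r, hr, t, ht, S1, S2, hd, h1, h2⟩ := hdp
        rcases hr with rfl | rfl <;> rcases ht with rfl | rfl
        · exact absurd h2.right (Set.disjoint_left.1 hd h1.right)
        · exact ⟨p, hp, q, hq, S1, S2, hd, h1, h2⟩
        · exact ⟨q, hq, p, hp, S2, S1, hd.symm, h2, h1⟩
        · exact absurd h2.right (Set.disjoint_left.1 hd h1.right)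
      obtain ⟨p, hp, q, hq, S1, S2, hd, h1, h2⟩ := gen
      obtain ⟨T1, hT1, h1', h1''⟩ := h1.trim
      refine ⟨p, hp, q, hq, T1, reach G' S2 q, ?_, h1', reach_conn h2, ?_⟩
      · exact hd.mono hT1 reach_sub
      · rintro z (hz | hz) hzw
        · exact ⟨p, hp, (h1'' z hz hzw).mono (fun t ht => ht.2)⟩
        · refine ⟨q, hq, LP.mono hz ?_⟩
          intro t ht (htw : t = w)
          subst htw
          exact Set.disjoint_left.1 hd h1.right ht
    have sA := side A B x y (ih G' _ _ hN' (menger_side hG hub hw hx hy))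
    have sB := side B A y x (ih G' _ _ hN' (menger_side hGs hub.symm (fun u hu v hv h => hw v hv u hu h.symm) hyB hxB))
    obtain ⟨p, hp, q, hq, S1, S2, hd, h1, h2, h3⟩ := sA
    obtain ⟨r, hr, t, ht, T1, T2, hd', h1', h2', h3'⟩ := sB
    have hST : ∀ z, z ∈ S1 ∪ S2 → z ∈ T1 ∪ T2 → z = w := by
      intro z hz hz'
      by_contra hzw
      obtain ⟨u, hu, h⟩ := h3 z hz hzw
      obtain ⟨v, hv, h'⟩ := h3' z hz' hzw
      exact hw u hu v hv (h.trans h'.symm)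
    have hw2 : w ∉ S2 := Set.disjoint_left.1 hd h1.right
    have hw2' : w ∉ T2 := Set.disjoint_left.1 hd' h1'.right
    refine ⟨p, hp, q, hq, r, hr, t, ht, S1 ∪ T1, S2 ∪ T2, ?_, ?_, ?_⟩
    · rw [Set.disjoint_left]
      rintro z (hz | hz) (hz' | hz')
      · exact Set.disjoint_left.1 hd hz hz'
      · exact hw2' (hST z (Or.inl hz) (Or.inr hz') ▸ hz')
      · exact hw2 (hST z (Or.inr hz') (Or.inl hz) ▸ hz')
      · exact Set.disjoint_left.1 hd' hz hz'
    · exact ((mono h1).mono Set.subset_union_left).trans ((mono h1'.symm).mono Set.subset_union_right)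
    · exact (((mono h2).mono Set.subset_union_left).snoc e (Or.inr h2'.right)).trans
        ((mono h2'.symm).mono Set.subset_union_right)

def restr (G : SimpleGraph V) (S : Set V) : SimpleGraph V where
  Adj x y := G.Adj x y ∧ x ∈ S ∧ y ∈ S
  symm := ⟨fun x y h => ⟨h.1.symm, h.2.2, h.2.1⟩⟩
  loopless := ⟨fun x h => G.loopless.irrefl x h.1⟩

theorem menger [Finite V] {S : Set V} {p q r t : V} (hp : p ∈ S) (hq : q ∈ S) 
    (h : ∀ s, ∃ u, (u = p ∨ u = q) ∧ ∃ v, (v = r ∨ v = t) ∧ Conn G (S \ {s}) u v) :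
    ∃ S1 S2 : Set V, S1 ⊆ S ∧ S2 ⊆ S ∧ (∀ x ∈ S1, x ∉ S2) ∧
      ((Conn G S1 p r ∧ Conn G S2 q t) ∨ (Conn G S1 p t ∧ Conn G S2 q r)) := by
  have : Nonempty V := ⟨p⟩
  have hub : UB (restr G S) {p, q} {r, t} := by
    intro s
    obtain ⟨u, hu, v, hv, hc⟩ := h s
    refine ⟨u, hu, v, hv, LP.mono (hc.gmono (fun x hx y hy e => ⟨e, hx.1, hy.1⟩)) (fun x hx => hx.2)⟩
  have back : ∀ {T : Set V} {u v : V}, u ∈ S → Conn (restr G S) T u v → Conn G (T ∩ S) u v := by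
    intro T u v hu hc
    refine hc.closed {z | Conn G (T ∩ S) u z} (LP.refl ⟨hc.left, hu⟩) ?_
    intro x hx hxT y hyT e
    exact LP.snoc hx e.1 ⟨hyT, e.2.2⟩
  obtain ⟨p', hp', q', hq', r', hr', t', ht', S1, S2, hd, h1, h2⟩ := menger_aux _ (restr G S) _ _ le_rfl hub
  have hne : p' ≠ q' := by rintro rfl; exact Set.disjoint_left.1 hd h1.left h2.left
  have hne' : r' ≠ t' := by rintro rfl; exact Set.disjoint_left.1 hd h1.right h2.right
  have hd1 : ∀ x ∈ S1 ∩ S, x ∉ S2 ∩ S := fun x hx hx' => Set.disjoint_left.1 hd hx.1 hx'.1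
  have hd2 : ∀ x ∈ S2 ∩ S, x ∉ S1 ∩ S := fun x hx hx' => Set.disjoint_left.1 hd hx'.1 hx.1
  have hpS : p' ∈ S := by rcases hp' with rfl | rfl <;> assumption
  have hqS : q' ∈ S := by rcases hq' with rfl | rfl <;> assumption
  have h1 := back hpS h1
  have h2 := back hqS h2
  rcases hp' with rfl | rfl <;> rcases hq' with rfl | rfl <;> try exact absurd rfl hne
  · refine ⟨S1 ∩ S, S2 ∩ S, Set.inter_subset_right, Set.inter_subset_right, hd1, ?_⟩
    rcases hr' with rfl | rfl <;> rcases ht' with rfl | rfl <;> try exact absurd rfl hne'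
    · exact Or.inl ⟨h1, h2⟩
    · exact Or.inr ⟨h1, h2⟩
  · refine ⟨S2 ∩ S, S1 ∩ S, Set.inter_subset_right, Set.inter_subset_right, hd2, ?_⟩
    rcases hr' with rfl | rfl <;> rcases ht' with rfl | rfl <;> try exact absurd rfl hne'
    · exact Or.inr ⟨h2, h1⟩
    · exact Or.inl ⟨h2, h1⟩
end HC

set_option linter.unusedVariables false
namespace HC
variable {V : Type*} {G : SimpleGraph V}

structure Lobe (G : SimpleGraph V) (J : Set V) (r w : V) (C : Set V) : Prop where
  hw : w ∈ J
  ne : C.Nonempty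
  sub : C ⊆ J
  hwC : w ∉ C
  hr : r ∉ C
  cn : Cn G C
  cl : ∀ x ∈ C, ∀ y ∈ J, G.Adj x y → y ∈ C ∨ y = w

structure MinLobe (G : SimpleGraph V) (J : Set V) (r w : V) (C : Set V) : Prop extends Lobe G J r w C where
  min : ∀ w' C', Lobe G J r w' C' → C' ⊆ C → C' = C

variable {J C E : Set V} {r w s z : V}

theorem Lobe.exists_min [Finite V] (h : Lobe G J r w C) : ∃ w' C', MinLobe G J r w' C' ∧ C' ⊆ C := by
  have key : ∀ N : ℕ, ∀ w C, C.ncard ≤ N → Lobe G J r w C → ∃ w' C', MinLobe G J r w' C' ∧ C' ⊆ C := by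
    intro N
    induction N with
    | zero =>
      intro w C hC h
      have : C = ∅ := (Set.ncard_eq_zero (Set.toFinite _)).1 (by omega)
      exact absurd h.ne (by simp [this])
    | succ N ih =>
      intro w C hC h
      by_cases hm : ∀ w' C', Lobe G J r w' C' → C' ⊆ C → C' = C
      · exact ⟨w, C, ⟨h, hm⟩, le_rfl⟩
      · push Not at hm
        obtain ⟨w', C', h', hs, hne⟩ := hm
        have := Set.ncard_lt_ncard (hs.ssubset_of_ne hne) (Set.toFinite _)
        obtain ⟨w'', C'', h1, h2⟩ := ih w' C' (by omega) h'
        exact ⟨w'', C'', h1, h2.trans hs⟩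
  exact key _ w C le_rfl h

theorem Lobe.of_reach (hs : s ∈ J) (hz : z ∈ J) (hzs : z ≠ s) (hr : ¬ Conn G (J \ {s}) z r) :
    Lobe G J r s (reach G (J \ {s}) z) where
  hw := hs
  ne := ⟨z, reach_self ⟨hz, hzs⟩⟩
  sub := fun x hx => (reach_sub hx).1
  hwC := fun h => (reach_sub h).2 rfl
  hr := hr
  cn := reach_Cn
  cl := by
    intro x hx y hy e
    by_cases h : y = s
    · exact Or.inr h
    · exact Or.inl (reach_closed hx ⟨hy, h⟩ e)

theorem Lobe.not_conn (h : Lobe G J r w C) (hz : z ∈ C) : ¬ Conn G (J \ {w}) z r := by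
  intro hc
  refine h.hr (hc.closed C hz ?_)
  intro x hx _ y hy e
  exact (h.cl x hx y hy.1 e).resolve_right hy.2

theorem Lobe.adj (hJ : Cn G J) (hr : r ∈ J) (h : Lobe G J r w C) : ∃ x ∈ C, G.Adj x w := by
  obtain ⟨z, hz⟩ := h.ne
  obtain ⟨x, hx, _, y, hy, hyC, e⟩ := (hJ z (h.sub hz) r hr).cross C hz h.hr
  rcases h.cl x hx y hy e with h | rfl
  · exact absurd h hyC
  · exact ⟨x, hx, e⟩

theorem Lobe.compl_root (hJ : Cn G J) (h : Lobe G J r w C) (hz : z ∈ J) (hzC : z ∉ C) : Conn G (J \ C) z w := by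
  by_contra hc
  have : w ∈ reach G (J \ C) z := by
    refine (hJ z hz w h.hw).closed _ (reach_self ⟨hz, hzC⟩) ?_
    intro x hx hxJ y hy e
    refine reach_closed hx ⟨hy, ?_⟩ e
    intro hyC
    rcases h.cl y hyC x hxJ e.symm with h1 | rfl
    · exact (reach_sub hx).2 h1
    · exact hc hx
  exact hc this

theorem Lobe.compl (hJ : Cn G J) (h : Lobe G J r w C) : Cn G (J \ C) :=
  Cn.of_root w (fun z hz => h.compl_root hJ hz.1 hz.2)

theorem Lobe.ins (hJ : Cn G J) (hr : r ∈ J) (h : Lobe G J r w C) : Cn G (insert w C) := by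
  obtain ⟨x, hx, e⟩ := h.adj hJ hr
  apply Cn.of_root w
  rintro z (rfl | hz)
  · exact LP.refl (by simp)
  · exact ((h.cn z hz x hx).mono (Set.subset_insert _ _)).snoc e (by simp)

theorem MinLobe.conn (hJ : Cn G J) (hr : r ∈ J) (h : MinLobe G J r w E) {t : V}
    (hz : z ∈ E) (hzt : z ≠ t) (htw : t ≠ w) : Conn G (insert w E \ {t}) z w := by
  by_cases ht : t ∈ E
  swap
  · refine (h.ins hJ hr z (Or.inr hz) w (by simp)).mono ?_
    rintro x (rfl | hx)
    · exact ⟨by simp, fun h => htw h.symm⟩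
    · exact ⟨Or.inr hx, fun h => ht (h ▸ hx)⟩
  by_contra hc
  have hKE : reach G (insert w E \ {t}) z ⊆ E := by
    intro x hx
    rcases (reach_sub hx).1 with rfl | h
    · exact absurd hx hc
    · exact h
  have hl : Lobe G J r t (reach G (insert w E \ {t}) z) := by
    refine ⟨h.sub ht, ⟨z, reach_self ⟨Or.inr hz, hzt⟩⟩, hKE.trans h.sub, fun h => (reach_sub h).2 rfl,
      fun hh => h.hr (hKE hh), reach_Cn, ?_⟩
    intro x hx y hy e
    by_cases hyt : y = t
    · exact Or.inr hyt
    · left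
      refine reach_closed hx ⟨?_, hyt⟩ e
      rcases h.cl x (hKE hx) y hy e with h1 | h1
      · exact Or.inr h1
      · exact Or.inl h1
  have := h.min t _ hl hKE
  rw [← this] at ht
  exact (reach_sub ht).2 rfl

section two
variable {w1 w2 : V} {E1 E2 : Set V}

theorem Lobe.not_both (hJ : Cn G J) (hr : r ∈ J) (h1 : Lobe G J r w1 E1) (h2 : Lobe G J r w2 E2)
    (h12 : w1 ∈ E2) (h21 : w2 ∈ E1) : False := by
  obtain ⟨z, hz⟩ := h1.ne
  have : r ∈ E1 ∪ E2 := by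
    refine (hJ z (h1.sub hz) r hr).closed _ (Or.inl hz) ?_
    rintro x (hx | hx) _ y hy e
    · rcases h1.cl x hx y hy e with h | rfl
      · exact Or.inl h
      · exact Or.inr h12
    · rcases h2.cl x hx y hy e with h | rfl
      · exact Or.inr h
      · exact Or.inl h21
  rcases this with h | h
  · exact h1.hr h
  · exact h2.hr h

theorem MinLobe.disj (hJ : Cn G J) (hr : r ∈ J) (h1 : MinLobe G J r w1 E1) (h2 : MinLobe G J r w2 E2)
    (hne : E1 ≠ E2) : ∀ x ∈ E1, x ∉ E2 := by
  intro x hx1 hx2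
  have key : ∀ {w1 w2 : V} {E1 E2 : Set V}, MinLobe G J r w1 E1 → MinLobe G J r w2 E2 → E1 ≠ E2 →
      x ∈ E1 → x ∈ E2 → w2 ∈ E1 := by
    intro w1 w2 E1 E2 h1 h2 hne hx1 hx2
    by_contra hw
    apply hne
    refine h2.min _ _ h1.toLobe ?_
    intro y hy
    refine (h1.cn x hx1 y hy).closed E2 hx2 ?_
    intro p hp _ q hq e
    exact (h2.cl p hp q (h1.sub hq) e).resolve_right (fun h => hw (h ▸ hq))
  exact Lobe.not_both hJ hr h1.toLobe h2.toLobe (key h2 h1 hne.symm hx2 hx1) (key h1 h2 hne hx1 hx2)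

theorem MinLobe.root_not (hJ : Cn G J) (hr : r ∈ J) (h1 : MinLobe G J r w1 E1) (h2 : MinLobe G J r w2 E2)
    (hne : E1 ≠ E2) : w1 ∉ E2 := by
  intro hw
  obtain ⟨x, hx, e⟩ := h1.adj hJ hr
  rcases h2.cl w1 hw x (h1.sub hx) e.symm with h | rfl
  · exact MinLobe.disj hJ hr h1 h2 hne x hx h
  · exact Lobe.not_both hJ hr h1.toLobe h2.toLobe hw hx

theorem MinLobe.compl_two (hJ : Cn G J) (hr : r ∈ J) (h1 : MinLobe G J r w1 E1) (h2 : MinLobe G J r w2 E2)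
    (hne : E1 ≠ E2) : Cn G ((J \ E1) \ E2) := by
  have hd := MinLobe.disj hJ hr h1 h2 hne
  have : Lobe G (J \ E1) r w2 E2 := by
    refine ⟨⟨h2.hw, MinLobe.root_not hJ hr h2 h1 hne.symm⟩, h2.ne, ?_, h2.hwC, h2.hr, h2.cn, ?_⟩
    · intro x hx; exact ⟨h2.sub hx, fun h => hd x h hx⟩
    · intro x hx y hy e; exact h2.cl x hx y hy.1 e
  exact this.compl (h1.compl hJ)
end two
end HC

set_option linter.unusedVariables false
namespace HC

/-- flip a coordinate -/
def fl {n : ℕ} (x : Fin n → Bool) (i : Fin n) : Fin n → Bool := Function.update x i (!x i)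

def par {n : ℕ} (x : Fin n → Bool) : Bool := decide ((∑ i, (x i).toNat) % 2 = 1)

section basic
variable {n : ℕ} {x y z : Fin n → Bool} {i j : Fin n}

theorem fl_same : fl x i i = !x i := by simp [fl]
theorem fl_ne (h : j ≠ i) : fl x i j = x j := by simp [fl, h]
theorem fl_fl : fl (fl x i) i = x := by
  ext j; by_cases h : j = i
  · subst h; simp [fl_same]
  · simp [fl_ne h]
theorem fl_inj (h : fl x i = fl x j) : i = j := by
  by_contra hne
  have := congrFun h i
  rw [fl_same, fl_ne hne] at this
  simp at this
theorem fl_comm : fl (fl x i) j = fl (fl x j) i := by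
  ext k
  by_cases hi : k = i <;> by_cases hj : k = j
  · subst hi; subst hj; rfl
  · subst hi; rw [fl_ne hj, fl_same, fl_same, fl_ne hj]
  · subst hj; rw [fl_ne hi, fl_same, fl_same, fl_ne hi]
  · rw [fl_ne hj, fl_ne hi, fl_ne hi, fl_ne hj]

theorem hyp_adj : (hypercube n).Adj x y ↔ ∃ i, y = fl x i := by
  have h0 : (hypercube n).Adj x y ↔ hammingDist x y = 1 := by
    unfold hypercube
    rw [SimpleGraph.fromRel_adj, hammingDist_comm y x, or_self]
    constructor
    · exact fun h => h.2
    · intro h; refine ⟨?_, h⟩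
      rintro rfl; simp at h
  rw [h0]
  unfold hammingDist
  rw [Finset.card_eq_one]
  constructor
  · rintro ⟨i, hi⟩
    refine ⟨i, ?_⟩
    ext j
    have := Finset.ext_iff.1 hi j
    simp only [Finset.mem_filter, Finset.mem_univ, true_and, Finset.mem_singleton] at this
    by_cases hj : j = i
    · subst hj; rw [fl_same]; have h := this.2 rfl
      cases h1 : x j <;> cases h2 : y j <;> simp_all
    · rw [fl_ne hj]; by_contra h; exact hj (this.1 (fun h' => h h'.symm))
  · rintro ⟨i, rfl⟩
    refine ⟨i, ?_⟩
    ext j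
    by_cases hj : j = i
    · subst hj; simp [fl_same]
    · simp [fl_ne hj, hj]

theorem par_fl : par (fl x i) = !par x := by
  have h1 : ∑ j, (fl x i j).toNat = (!x i).toNat + ∑ j ∈ Finset.univ.erase i, (x j).toNat := by
    rw [← Finset.add_sum_erase _ _ (Finset.mem_univ i), fl_same]
    congr 1
    apply Finset.sum_congr rfl
    intro j hj
    rw [fl_ne]; simpa using hj
  have h2 : ∑ j, (x j).toNat = (x i).toNat + ∑ j ∈ Finset.univ.erase i, (x j).toNat := by
    rw [← Finset.add_sum_erase _ _ (Finset.mem_univ i)]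
  unfold par
  rw [h1, h2]
  generalize ∑ j ∈ Finset.univ.erase i, (x j).toNat = N
  cases x i
  · simp only [Bool.not_false, Bool.toNat_true, Bool.toNat_false]
    rw [← decide_not, decide_eq_decide]; omega
  · simp only [Bool.not_true, Bool.toNat_true, Bool.toNat_false]
    rw [← decide_not, decide_eq_decide]; omega

theorem fl_ne_self : fl x i ≠ x := by
  intro h; have := congrFun h i; rw [fl_same] at this; simp at this
end basic

section deg
variable {V : Type*} [Finite V] {G : SimpleGraph V} {S T : Set V} {z t : V}

noncomputable def deg (G : SimpleGraph V) (S : Set V) (z : V) : ℕ := (S ∩ {y | G.Adj z y}).ncard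

theorem deg_sub (h : ∀ y ∈ S, G.Adj z y → y ∈ T) : deg G S z ≤ deg G T z :=
  Set.ncard_le_ncard (fun y hy => ⟨h y hy.1 hy.2, hy.2⟩) (Set.toFinite _)

theorem deg_sub1 (h : ∀ y ∈ S, G.Adj z y → y ∈ T ∨ y = t) : deg G S z ≤ deg G T z + 1 := by
  refine le_trans (Set.ncard_le_ncard (t := insert t (T ∩ {y | G.Adj z y})) ?_ (Set.toFinite _))
    (Set.ncard_insert_le _ _)
  intro y hy
  rcases h y hy.1 hy.2 with h | h
  · exact Or.inr ⟨h, hy.2⟩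
  · exact Or.inl h

/-- if z has at most one neighbour in S outside T -/
theorem deg_sub2 (h : ∀ y ∈ S, G.Adj z y → y ∉ T → ∀ y' ∈ S, G.Adj z y' → y' ∉ T → y = y') :
    deg G S z ≤ deg G T z + 1 := by
  by_cases hh : ∃ y ∈ S, G.Adj z y ∧ y ∉ T
  · obtain ⟨t, ht, e, htT⟩ := hh
    apply deg_sub1 (t := t)
    intro y hy e'
    by_cases hyT : y ∈ T
    · exact Or.inl hyT
    · exact Or.inr (h y hy e' hyT t ht e htT)
  · push Not at hh
    exact (deg_sub hh).trans (Nat.le_succ _)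

theorem deg_lt (h : deg G T z < deg G S z) : ∃ y ∈ S, y ∉ T ∧ G.Adj z y := by
  by_contra hc
  push Not at hc
  have : deg G S z ≤ deg G T z := deg_sub (fun y hy e => by
    by_contra hT; exact hc y hy hT e)
  omega

theorem deg_pos (h : 1 ≤ deg G S z) : ∃ y ∈ S, G.Adj z y := by
  obtain ⟨y, hy⟩ := (Set.ncard_pos (Set.toFinite _)).1 h
  exact ⟨y, hy.1, hy.2⟩

theorem deg_two (h : 2 ≤ deg G S z) (t : V) : ∃ y ∈ S, y ≠ t ∧ G.Adj z y := by
  have : deg G S z ≤ deg G (S \ {t}) z + 1 := by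
    apply deg_sub1 (t := t)
    intro y hy _
    by_cases h : y = t
    · exact Or.inr h
    · exact Or.inl ⟨hy, h⟩
  obtain ⟨y, hy, e⟩ := deg_pos (show 1 ≤ deg G (S \ {t}) z by omega)
  exact ⟨y, hy.1, hy.2, e⟩

theorem deg_three (h : 3 ≤ deg G S z) (t t' : V) : ∃ y ∈ S, y ≠ t ∧ y ≠ t' ∧ G.Adj z y := by
  have : deg G S z ≤ deg G (S \ {t}) z + 1 := by
    apply deg_sub1 (t := t)
    intro y hy _
    by_cases h : y = t
    · exact Or.inr h
    · exact Or.inl ⟨hy, h⟩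
  obtain ⟨y, hy, h1, e⟩ := deg_two (show 2 ≤ deg G (S \ {t}) z by omega) t'
  exact ⟨y, hy.1, hy.2, h1, e⟩

theorem card_of_deg (hz : z ∈ S) (h : 2 ≤ deg G S z) : 3 ≤ S.ncard := by
  obtain ⟨y, hy, _, e⟩ := deg_two h z
  obtain ⟨y', hy', h1, e'⟩ := deg_two h y
  have : ({z, y, y'} : Set V) ⊆ S := by
    rintro x (rfl | rfl | rfl) <;> assumption
  have h3 := Set.ncard_le_ncard this (Set.toFinite _)
  rw [Set.ncard_eq_three.2 ⟨z, y, y', e.ne, e'.ne, h1.symm, rfl⟩] at h3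
  exact h3
end deg

section main
variable {n : ℕ}

def Cub (Γ : SimpleGraph (Fin n → Bool)) : Prop := ∀ x y, Γ.Adj x y → ∃ i, y = fl x i

def FullSub (Γ : SimpleGraph (Fin n → Bool)) (S : Set (Fin n → Bool)) (k : ℕ) : Prop :=
  ∃ (I : Finset (Fin n)) (u : Fin n → Bool), I.card = k ∧ (∀ x, x ∈ S ↔ ∀ i, i ∉ I → x i = u i) ∧
    ∀ x ∈ S, ∀ i ∈ I, Γ.Adj x (fl x i)

def Ch {V : Type*} (Γ : SimpleGraph V) (S : Set V) (a b : V) : Prop :=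
  ∀ U : Set V, U ⊆ S → U.Nonempty → a ∉ U → b ∉ U → ∀ t, ∃ x ∈ U, ∃ y ∈ S, y ∉ U ∧ y ≠ t ∧ Γ.Adj x y

structure Good (Γ : SimpleGraph (Fin n → Bool)) (d : ℕ) (S : Set (Fin n → Bool)) (a b : Fin n → Bool) : Prop where
  ha : a ∈ S
  hb : b ∈ S
  ne : a ≠ b
  card : 3 ≤ S.ncard
  ch : Ch Γ S a b
  dg : ∀ z ∈ S, z ≠ a → z ≠ b → d ≤ deg Γ S z

def TT (Γ : SimpleGraph (Fin n → Bool)) (d : ℕ) : Prop := ∀ S a b, Good Γ d S a b →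
  LP Γ S a b (2 ^ d - 2) ∧
  (¬ (FullSub Γ S d ∧ par a = par b) → ¬ (d = 2 ∧ S.ncard = 3) → LP Γ S a b (2 ^ d - 1))

variable {Γ : SimpleGraph (Fin n → Bool)} (hΓ : Cub Γ) {S T : Set (Fin n → Bool)}
  {a b c w x y z : Fin n → Bool} {k e : ℕ}

theorem Ch.symm {V : Type*} {Γ : SimpleGraph V} {S : Set V} {a b : V} (h : Ch Γ S a b) : Ch Γ S b a :=
  fun U h1 h2 h3 h4 => h U h1 h2 h4 h3

theorem Good.symm (h : Good Γ k S a b) : Good Γ k S b a :=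
  ⟨h.hb, h.ha, h.ne.symm, h.card, h.ch.symm, fun z hz h1 h2 => h.dg z hz h2 h1⟩

include hΓ

theorem par_adj (h : Γ.Adj x y) : par y = !par x := by
  obtain ⟨i, rfl⟩ := hΓ x y h; exact par_fl

theorem par_adj2 (h : Γ.Adj x y) (h' : Γ.Adj y z) : par x = par z := by
  rw [par_adj hΓ h', par_adj hΓ h]; simp

theorem P_par (h : P Γ S a b k) : par a = par b ↔ Even k := by
  induction h with
  | nil => simp
  | cons h e p ih =>
    rw [Nat.even_add_one, ← ih, par_adj hΓ e]
    cases par ‹_› <;> cases par ‹_› <;> simp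

theorem LP_even (h : LP Γ S a b k) (hk : ¬ Even k) (hp : par a = par b) : LP Γ S a b (k + 1) := by
  obtain ⟨m, hm, h⟩ := h
  have := (P_par hΓ h).1 hp
  refine ⟨m, ?_, h⟩
  rcases hm.eq_or_lt with rfl | h
  · exact absurd this hk
  · exact h

theorem LP_odd (h : LP Γ S a b k) (hk : Even k) (hp : par a ≠ par b) : LP Γ S a b (k + 1) := by
  obtain ⟨m, hm, h⟩ := h
  have := mt (P_par hΓ h).2 hp
  refine ⟨m, ?_, h⟩
  rcases hm.eq_or_lt with rfl | h
  · exact absurd hk this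
  · exact h

theorem no_tri (h1 : Γ.Adj x y) (h2 : Γ.Adj y z) (h3 : Γ.Adj x z) : False := by
  have := par_adj2 hΓ h1 h2
  rw [par_adj hΓ h3] at this; simp at this

/-- two common neighbours at most -/
theorem FullSub.deg_le (h : FullSub Γ S k) (hx : x ∈ S) : deg Γ S x ≤ k := by
  obtain ⟨I, u, hI, hS, hadj⟩ := h
  have : S ∩ {y | Γ.Adj x y} ⊆ (fl x) '' (I : Set (Fin n)) := by
    rintro y ⟨hy, hxy⟩
    obtain ⟨i, rfl⟩ := hΓ x y hxy
    refine ⟨i, ?_, rfl⟩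
    by_contra hi
    have h1 := (hS _).1 hy i hi
    have h2 := (hS _).1 hx i hi
    rw [fl_same, h2] at h1; simp at h1
  calc deg Γ S x ≤ _ := Set.ncard_le_ncard this (Set.toFinite _)
    _ ≤ (I : Set (Fin n)).ncard := Set.ncard_image_le (Set.toFinite _)
    _ = k := by rw [Set.ncard_coe_finset, hI]

/-- a vertex outside has at most one neighbour inside -/
theorem FullSub.out (h : FullSub Γ S k) (hx : x ∉ S) (hy : y ∈ S) (hz : z ∈ S)
    (h1 : Γ.Adj x y) (h2 : Γ.Adj x z) : y = z := by
  obtain ⟨I, u, hI, hS, hadj⟩ := h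
  obtain ⟨i, rfl⟩ := hΓ x y h1
  obtain ⟨j, rfl⟩ := hΓ x z h2
  have : ∃ m, m ∉ I ∧ x m ≠ u m := by
    by_contra hc; push Not at hc; exact hx ((hS x).2 hc)
  obtain ⟨m, hm, hne⟩ := this
  have e1 : m = i := by
    by_contra hmi
    have := (hS _).1 hy m hm
    rw [fl_ne hmi] at this; exact hne this
  have e2 : m = j := by
    by_contra hmi
    have := (hS _).1 hz m hm
    rw [fl_ne hmi] at this; exact hne this
  rw [← e1, ← e2]

omit hΓ in
theorem FullSub.nbr (h : FullSub Γ S k) (hx : x ∈ S) (hk : 2 ≤ k) (t : Fin n → Bool) :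
    ∃ y ∈ S, y ≠ t ∧ Γ.Adj x y := by
  obtain ⟨I, u, hI, hS, hadj⟩ := h
  obtain ⟨i, hi, j, hj, hij⟩ := Finset.one_lt_card.1 (show 1 < I.card by omega)
  have key : ∀ i ∈ I, fl x i ∈ S := by
    intro i hi
    rw [hS]
    intro m hm
    rw [fl_ne (by rintro rfl; exact hm hi)]
    exact (hS x).1 hx m hm
  by_cases h : fl x i = t
  · refine ⟨fl x j, key j hj, ?_, hadj x hx j hj⟩
    rw [← h]; intro h'; exact hij (fl_inj h').symm
  · exact ⟨fl x i, key i hi, h, hadj x hx i hi⟩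

/-- piece lemma -/
theorem piece (hT : TT Γ e) (he : 2 ≤ e) {E : Set (Fin n → Bool)} (hwE : w ∉ E) (hE : Cn Γ E)
    (hc : ∀ z ∈ E, ∀ t, z ≠ t → t ≠ w → Conn Γ (insert w E \ {t}) z w)
    (hd : ∀ z ∈ E, e ≤ deg Γ (insert w E) z) (hx : x ∈ E) :
    LP Γ (insert w E) w x (2 ^ e - 2) ∧
      (¬ (FullSub Γ (insert w E) e ∧ par w = par x) → LP Γ (insert w E) w x (2 ^ e - 1)) := by
  have hxw : x ≠ w := by rintro rfl; exact hwE hx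
  have hch : Ch Γ (insert w E) w x := by
    intro U hU hne hwU hxU t
    have hUE : U ⊆ E := by
      intro z hz; rcases hU hz with rfl | h
      · exact absurd hz hwU
      · exact h
    obtain ⟨z, hz⟩ := hne
    by_cases htw : t = w
    · obtain ⟨p, hp, hpS, q, hq, hqU, e⟩ := (hE z (hUE hz) x hx).cross U hz hxU
      exact ⟨p, hp, q, Or.inr hq, hqU, fun h => hwE (htw ▸ h ▸ hq), e⟩
    · by_cases hzt : z = t
      · obtain ⟨p, hp, hpS, q, hq, hqU, e⟩ := (hc z (hUE hz) x (by rintro rfl; exact hxU hz) hxw).cross U hz hwU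
        exact ⟨p, hp, q, hq.1, hqU, fun h => hqU (h ▸ hzt ▸ hz), e⟩
      · obtain ⟨p, hp, hpS, q, hq, hqU, e⟩ := (hc z (hUE hz) t hzt htw).cross U hz hwU
        exact ⟨p, hp, q, hq.1, hqU, hq.2, e⟩
  have hg : Good Γ e (insert w E) w x := ⟨by simp, Or.inr hx, hxw.symm,
    card_of_deg (Or.inr hx) (he.trans (hd x hx)), hch, by
      rintro z (rfl | hz) h1 h2
      · exact absurd rfl h1
      · exact hd z hz⟩
  refine ⟨(hT _ _ _ hg).1, fun h => (hT _ _ _ hg).2 h ?_⟩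
  rintro ⟨rfl, h3⟩
  obtain ⟨y, hy, hyw, e1⟩ := deg_two (hd x hx) w
  have hyE : y ∈ E := hy.resolve_left hyw
  have hsub : insert w E = {w, x, y} := by
    symm
    apply Set.eq_of_subset_of_ncard_le
    · rintro z (rfl | rfl | rfl)
      · simp
      · exact Or.inr hx
      · exact hy
    · rw [Set.ncard_eq_three.2 ⟨w, x, y, hxw.symm, hyw.symm, e1.ne, rfl⟩]; exact h3.le
    · exact Set.toFinite _
  have hwx : Γ.Adj x w := by
    obtain ⟨q, hq, hqy, e2⟩ := deg_two (hd x hx) y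
    rw [hsub] at hq
    rcases hq with rfl | rfl | rfl
    · exact e2
    · exact absurd rfl e2.ne
    · exact absurd rfl hqy
  have hwy : Γ.Adj y w := by
    obtain ⟨q, hq, hqy, e2⟩ := deg_two (hd y hyE) x
    rw [hsub] at hq
    rcases hq with rfl | rfl | rfl
    · exact e2
    · exact absurd rfl hqy
    · exact absurd rfl e2.ne
  exact no_tri hΓ e1 hwy hwx
end main
end HC

set_option linter.unusedVariables false
set_option linter.unusedSectionVars false
namespace HC
section fan
variable {V : Type*} [Finite V] {G : SimpleGraph V} {S : Set V} {a b z : V}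

theorem restr_back {T : Set V} {u v : V} (hu : u ∈ S) (hc : Conn (restr G S) T u v) : Conn G (T ∩ S) u v := by
  refine hc.closed {z | Conn G (T ∩ S) u z} (LP.refl ⟨hc.left, hu⟩) ?_
  intro x hx hxT y hyT e
  exact LP.snoc hx e.1 ⟨hyT, e.2.2⟩

theorem fan (ha : a ∈ S) (hb : b ∈ S) (hch : Ch G S a b) (hz : z ∈ S) (hza : z ≠ a) (hzb : z ≠ b) :
    ∃ S1 S2 : Set V, ∃ y y' : V, S1 ⊆ S \ {z} ∧ S2 ⊆ S \ {z} ∧ (∀ x ∈ S1, x ∉ S2) ∧ Conn G S1 a y ∧ Conn G S2 b y' ∧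
      G.Adj z y ∧ G.Adj z y' := by
  have : Nonempty V := ⟨a⟩
  have hub : UB (restr G (S \ {z})) {a, b} {y | G.Adj z y} := by
    intro s
    have h1 : Conn G {x | x ∈ S ∧ (x = z ∨ x ≠ s)} z a ∨ Conn G {x | x ∈ S ∧ (x = z ∨ x ≠ s)} z b := by
      by_contra hc
      push Not at hc
      obtain ⟨x, hx, y, hy, hyU, hys, e⟩ := hch (reach G {x | x ∈ S ∧ (x = z ∨ x ≠ s)} z) 
        (fun x hx => (reach_sub hx).1) ⟨z, reach_self ⟨hz, Or.inl rfl⟩⟩ hc.1 hc.2 s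
      exact hyU (reach_closed hx ⟨hy, Or.inr hys⟩ e)
    have key : ∀ c, z ≠ c → Conn G {x | x ∈ S ∧ (x = z ∨ x ≠ s)} z c → ∃ v, G.Adj z v ∧ Conn (restr G (S \ {z})) {s}ᶜ c v := by
      rintro c hzc ⟨m, _, hp⟩
      cases hp with
      | nil h => exact absurd rfl hzc
      | @cons _ _ v _ k h e p =>
        have p' : Conn G ({x | x ∈ S ∧ (x = z ∨ x ≠ s)} \ {z}) v c := ⟨k, Nat.zero_le _, p⟩
        refine ⟨v, e, LP.mono (p'.symm.gmono ?_) ?_⟩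
        · exact fun x hx y hy e => ⟨e, ⟨hx.1.1, hx.2⟩, hy.1.1, hy.2⟩
        · rintro x ⟨⟨_, h⟩, h2⟩
          exact h.resolve_left h2
    rcases h1 with h | h
    · obtain ⟨v, e, hc⟩ := key a hza h
      exact ⟨a, by simp, v, e, hc⟩
    · obtain ⟨v, e, hc⟩ := key b hzb h
      exact ⟨b, by simp, v, e, hc⟩
  obtain ⟨p, hp, q, hq, r, hr, t, ht, S1, S2, hd, h1, h2⟩ := menger_aux _ _ _ _ le_rfl hub
  have hne : p ≠ q := by rintro rfl; exact Set.disjoint_left.1 hd h1.left h2.left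
  rcases hp with rfl | rfl <;> rcases hq with rfl | rfl <;> try exact absurd rfl hne
  · exact ⟨S1 ∩ (S \ {z}), S2 ∩ (S \ {z}), r, t, Set.inter_subset_right, Set.inter_subset_right,
      fun x hx hx' => Set.disjoint_left.1 hd hx.1 hx'.1, restr_back ⟨ha, hza.symm⟩ h1, restr_back ⟨hb, hzb.symm⟩ h2, hr, ht⟩
  · exact ⟨S2 ∩ (S \ {z}), S1 ∩ (S \ {z}), t, r, Set.inter_subset_right, Set.inter_subset_right,
      fun x hx hx' => Set.disjoint_left.1 hd hx'.1 hx.1, restr_back ⟨ha, hza.symm⟩ h2, restr_back ⟨hb, hzb.symm⟩ h1, ht, hr⟩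

theorem fan_path (ha : a ∈ S) (hb : b ∈ S) (hch : Ch G S a b) (hz : z ∈ S) (hza : z ≠ a) (hzb : z ≠ b) :
    LP G S a b 2 ∧ (LP G S a b 3 ∨ (G.Adj a z ∧ G.Adj z b)) := by
  obtain ⟨S1, S2, y, y', hS1, hS2, hd, h1, h2, e, e'⟩ := fan ha hb hch hz hza hzb
  have gen : ∀ k l, LP G S1 a y k → LP G S2 b y' l → LP G S a b (k + 1 + (l + 1)) := by
    intro k l h1 h2
    have h3 := LP.cons (fun h => (hS2 h).2 rfl) e' h2.symm
    refine (h1.edge e.symm h3 ?_).mono ?_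
    · rintro x hx (rfl | hx')
      · exact (hS1 hx).2 rfl
      · exact hd x hx hx'
    · rintro x (hx | rfl | hx)
      · exact (hS1 hx).1
      · exact hz
      · exact (hS2 hx).1
  refine ⟨gen 0 0 h1 h2, ?_⟩
  by_cases hay : a = y
  · by_cases hby : b = y'
    · subst hay; subst hby; exact Or.inr ⟨e.symm, e'⟩
    · exact Or.inl (gen 0 1 h1 (h2.one hby))
  · exact Or.inl (gen 1 0 (h1.one hay) h2)
end fan

variable {n : ℕ} {Γ : SimpleGraph (Fin n → Bool)} (hΓ : Cub Γ) {S T : Set (Fin n → Bool)}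
  {a b c w x y z : Fin n → Bool} {k e : ℕ}

theorem exists_third {V : Type*} [Finite V] {S : Set V} (h : 3 ≤ S.ncard) (a b : V) : ∃ z ∈ S, z ≠ a ∧ z ≠ b := by
  by_contra hc
  push Not at hc
  have : S ⊆ {a, b} := by
    intro z hz
    by_cases h : z = a
    · exact Or.inl h
    · exact Or.inr (hc z hz h)
  have h1 := Set.ncard_le_ncard this (Set.toFinite _)
  have h2 := Set.ncard_insert_le a {b}
  rw [Set.ncard_singleton] at h2
  omega

theorem exists_fourth {V : Type*} [Finite V] {S : Set V} (h : 4 ≤ S.ncard) (a b c : V) :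
    ∃ z ∈ S, z ≠ a ∧ z ≠ b ∧ z ≠ c := by
  have : 3 ≤ (S \ {c}).ncard := by
    have := Set.ncard_le_ncard_sdiff_add_ncard S {c}
    rw [Set.ncard_singleton] at this
    omega
  obtain ⟨z, hz, h1, h2⟩ := exists_third this a b
  exact ⟨z, hz.1, h1, h2, hz.2⟩

include hΓ
theorem TT_two : TT Γ 2 := by
  intro S a b hg
  obtain ⟨z, hz, hza, hzb⟩ := exists_third hg.card a b
  refine ⟨(fan_path hg.ha hg.hb hg.ch hz hza hzb).1, ?_⟩
  intro hF hc3
  by_contra hno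
  have hcard : 4 ≤ S.ncard := by
    have := hg.card
    rcases this.eq_or_lt with h | h
    · exact absurd ⟨rfl, h.symm⟩ hc3
    · exact h
  have key : ∀ z ∈ S, z ≠ a → z ≠ b → Γ.Adj a z ∧ Γ.Adj z b := fun z hz h1 h2 =>
    (fan_path hg.ha hg.hb hg.ch hz h1 h2).2.resolve_left hno
  obtain ⟨z', hz', hza', hzb', hzz'⟩ := exists_fourth hcard a b z
  obtain ⟨e1, e2⟩ := key z hz hza hzb
  obtain ⟨e3, e4⟩ := key z' hz' hza' hzb'
  obtain ⟨i, hi⟩ := hΓ _ _ e1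
  obtain ⟨j, hj⟩ := hΓ _ _ e2
  subst hi
  have hij : i ≠ j := by
    rintro rfl; rw [fl_fl] at hj; exact hg.ne hj.symm
  have two : ∀ k m, b = fl (fl a k) m → k = i ∨ k = j := by
    intro k m hb
    by_contra hc
    push Not at hc
    have hkm : k ≠ m := by
      rintro rfl; rw [fl_fl] at hb; exact hg.ne hb.symm
    have h1 : b k = !a k := by rw [hb, fl_ne hkm, fl_same]
    have h2 : b k = a k := by rw [hj, fl_ne hc.2, fl_ne hc.1]
    rw [h2] at h1; simp at h1
  obtain ⟨k, hk⟩ := hΓ _ _ e3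
  obtain ⟨m0, hm0⟩ := hΓ _ _ e4
  have hkj : k = j := by
    rw [hk] at hm0
    rcases two k m0 hm0 with rfl | h
    · exact absurd hk hzz'
    · exact h
  subst hkj
  subst hk
  apply hF
  refine ⟨⟨{i, k}, a, Finset.card_pair hij, ?_, ?_⟩, par_adj2 hΓ e1 e2⟩
  · intro x
    constructor
    · intro hx m hm
      simp only [Finset.mem_insert, Finset.mem_singleton, not_or] at hm
      by_cases hxa : x = a
      · rw [hxa]
      by_cases hxb : x = b
      · rw [hxb, hj, fl_ne hm.2, fl_ne hm.1]
      obtain ⟨e5, e6⟩ := key x hx hxa hxb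
      obtain ⟨p, hp⟩ := hΓ _ _ e5
      obtain ⟨q, hq⟩ := hΓ _ _ e6
      rw [hp] at hq
      rw [hp]
      rcases two p q hq with rfl | rfl
      · exact fl_ne hm.1
      · exact fl_ne hm.2
    · intro hx
      have heq : ∀ y : Fin n → Bool, (∀ m, m ≠ i → m ≠ k → y m = a m) → x i = y i → x k = y k → x = y := by
        intro y hy h1 h2
        ext m
        by_cases hmi : m = i
        · subst hmi; exact h1
        by_cases hmk : m = k
        · subst hmk; exact h2
        rw [hy m hmi hmk, hx m (by simp [hmi, hmk])]
      by_cases h1 : x i = a i <;> by_cases h2 : x k = a k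
      · rw [heq a (fun _ _ _ => rfl) h1 h2]; exact hg.ha
      · rw [heq (fl a k) (fun m _ h => fl_ne h) (by rw [fl_ne hij]; exact h1) (by rw [fl_same]; exact Bool.eq_not.2 h2)]
        exact hz'
      · rw [heq (fl a i) (fun m h _ => fl_ne h) (by rw [fl_same]; exact Bool.eq_not.2 h1) (by rw [fl_ne hij.symm]; exact h2)]
        exact hz
      · rw [heq b (fun m h h' => by rw [hj, fl_ne h', fl_ne h]) (by rw [hj, fl_ne hij, fl_same]; exact Bool.eq_not.2 h1)
          (by rw [hj, fl_same, fl_ne hij.symm]; exact Bool.eq_not.2 h2)]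
        exact hg.hb
  · have hj' : b = fl (fl a k) i := by rw [hj, fl_comm]
    intro x hx m hm
    simp only [Finset.mem_insert, Finset.mem_singleton] at hm
    by_cases hxa : x = a
    · subst hxa
      rcases hm with h | h
      · rw [h]; exact e1
      · rw [h]; exact e3
    by_cases hxb : x = b
    · rw [hxb]
      rcases hm with rfl | rfl
      · rw [hj', fl_fl, ← hj']; exact e4.symm
      · rw [hj, fl_fl, ← hj]; exact e2.symm
    obtain ⟨e5, e6⟩ := key x hx hxa hxb
    obtain ⟨p, hp⟩ := hΓ _ _ e5
    obtain ⟨q, hq⟩ := hΓ _ _ e6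
    rw [hp] at hq
    rcases two p q hq with rfl | rfl <;> rcases hm with rfl | rfl <;> rw [hp]
    · rw [fl_fl]; exact e1.symm
    · rw [← hj]; exact e2
    · rw [← hj']; exact e4
    · rw [fl_fl]; exact e3.symm

theorem merge {L R : Set (Fin n → Bool)} (he : 2 ≤ e) (hL : FullSub Γ L e) (hR : FullSub Γ R e) (hd : ∀ x ∈ L, x ∉ R)
    (ha : a ∈ L) (hb : b ∈ R) (h1 : ∀ z ∈ L, z ≠ a → ∃ y ∈ R, Γ.Adj z y) (h2 : ∀ z ∈ R, z ≠ b → ∃ y ∈ L, Γ.Adj z y)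
    (hp : par a = par b) : FullSub Γ (L ∪ R) (e + 1) := by
  obtain ⟨I, u, hI, hL, hLa⟩ := hL
  obtain ⟨I', u', hI', hR, hRa⟩ := hR
  have key : ∀ z ∈ L, ∀ k, fl z k ∈ R → k ∉ I' ∧ z k ≠ u' k ∧ ∀ m, m ∉ I' → m ≠ k → z m = u' m := by
    intro z hz k hk
    have h3 : ∀ m, m ∉ I' → m ≠ k → z m = u' m := by
      intro m hm hmk
      rw [← (hR _).1 hk m hm, fl_ne hmk]
    have : ∃ m, m ∉ I' ∧ z m ≠ u' m := by
      by_contra hc; push Not at hc; exact hd z hz ((hR z).2 hc)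
    obtain ⟨m, hm, hne⟩ := this
    have : m = k := by by_contra h; exact hne (h3 m hm h)
    subst this
    exact ⟨hm, hne, h3⟩
  have flL : ∀ z ∈ L, ∀ i ∈ I, fl z i ∈ L := by
    intro z hz i hi
    rw [hL]
    intro m hm
    rw [fl_ne (by rintro rfl; exact hm hi)]
    exact (hL z).1 hz m hm
  have hsub : I ⊆ I' := by
    intro j hj
    by_contra hjI
    obtain ⟨i, hi, hij⟩ := Finset.exists_mem_ne (show 1 < I.card by omega) j
    have hz := flL a ha i hi
    have hz' := flL _ hz j hj
    have hza : fl (fl a i) j ≠ a := by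
      intro h
      have := congrFun h i
      rw [fl_ne hij, fl_same] at this
      simp at this
    obtain ⟨y, hy, e1⟩ := h1 _ hz fl_ne_self
    obtain ⟨y', hy', e2⟩ := h1 _ hz' hza
    obtain ⟨k, rfl⟩ := hΓ _ _ e1
    obtain ⟨k', rfl⟩ := hΓ _ _ e2
    obtain ⟨k1, k2, k3⟩ := key _ hz k hy
    obtain ⟨k1', k2', k3'⟩ := key _ hz' k' hy'
    by_cases hjk : j = k
    · subst hjk
      by_cases hjk' : k' = j
      · subst hjk'
        rw [fl_same] at k2'
        exact k2' (Bool.eq_not.2 k2.symm).symm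
      · rw [fl_ne hjk'] at k2'
        exact k2' (k3 k' k1' hjk')
    · have h5 := k3 j hjI hjk
      by_cases hjk' : k' = j
      · subst hjk'
        have := k3' k k1 (fun h => hjk h.symm)
        rw [fl_ne (fun h => hjk h.symm)] at this
        exact k2 this
      · have := k3' j hjI (fun h => hjk' h.symm)
        rw [fl_same, h5] at this; simp at this
  have hII : I = I' := Finset.eq_of_subset_of_card_le hsub (by omega)
  subst hII
  obtain ⟨i, hi⟩ := Finset.card_pos.1 (show 0 < I.card by omega)
  obtain ⟨y, hy, e1⟩ := h1 _ (flL a ha i hi) fl_ne_self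
  obtain ⟨k, rfl⟩ := hΓ _ _ e1
  obtain ⟨k1, k2, k3⟩ := key _ (flL a ha i hi) k hy
  have hu : ∀ m, m ∉ I → fl a i m = u m := (hL _).1 (flL a ha i hi)
  have huk : u k ≠ u' k := by rw [← hu k k1]; exact k2
  have hum : ∀ m, m ∉ I → m ≠ k → u m = u' m := fun m hm hmk => by rw [← hu m hm]; exact k3 m hm hmk
  have LR : ∀ x ∈ L, ∀ m, fl x m ∈ R → m = k := by
    intro x hx m hm
    by_contra hmk
    have h5 := (hR _).1 hm k k1
    rw [fl_ne (fun h => hmk h.symm), (hL _).1 hx k k1] at h5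
    exact huk h5
  have RL : ∀ x ∈ R, ∀ m, fl x m ∈ L → m = k := by
    intro x hx m hm
    by_contra hmk
    have h5 := (hL _).1 hm k k1
    rw [fl_ne (fun h => hmk h.symm), (hR _).1 hx k k1] at h5
    exact huk h5.symm
  have fLR : ∀ x ∈ L, fl x k ∈ R := by
    intro x hx
    rw [hR]
    intro m hm
    by_cases hmk : m = k
    · subst hmk; rw [fl_same, (hL _).1 hx m hm]
      exact (Bool.eq_not.2 huk.symm).symm
    · rw [fl_ne hmk, (hL _).1 hx m hm, hum m hm hmk]
  have fRL : ∀ x ∈ R, fl x k ∈ L := by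
    intro x hx
    rw [hL]
    intro m hm
    by_cases hmk : m = k
    · subst hmk; rw [fl_same, (hR _).1 hx m hm]
      exact (Bool.eq_not.2 huk).symm
    · rw [fl_ne hmk, (hR _).1 hx m hm, hum m hm hmk]
  have aL : ∀ x ∈ L, x ≠ a → Γ.Adj x (fl x k) := by
    intro x hx hxa
    obtain ⟨y, hy, e1⟩ := h1 x hx hxa
    obtain ⟨m, rfl⟩ := hΓ _ _ e1
    rw [LR x hx m hy] at e1; exact e1
  have aR : ∀ x ∈ R, x ≠ b → Γ.Adj x (fl x k) := by
    intro x hx hxa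
    obtain ⟨y, hy, e1⟩ := h2 x hx hxa
    obtain ⟨m, rfl⟩ := hΓ _ _ e1
    rw [RL x hx m hy] at e1; exact e1
  have hab : fl a k ≠ b := by rintro rfl; rw [par_fl] at hp; simp at hp
  have hba : fl b k ≠ a := by rintro rfl; rw [par_fl] at hp; simp at hp
  refine ⟨insert k I, u, by rw [Finset.card_insert_of_notMem k1, hI], ?_, ?_⟩
  · intro x
    constructor
    · rintro (hx | hx) m hm
      · exact (hL x).1 hx m (fun h => hm (Finset.mem_insert_of_mem h))
      · rw [(hR x).1 hx m (fun h => hm (Finset.mem_insert_of_mem h))]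
        exact (hum m (fun h => hm (Finset.mem_insert_of_mem h)) (by rintro rfl; simp at hm)).symm
    · intro hx
      by_cases hxk : x k = u k
      · left; rw [hL]; intro m hm
        by_cases hmk : m = k
        · rw [hmk]; exact hxk
        · exact hx m (by simp [hm, hmk])
      · right; rw [hR]; intro m hm
        by_cases hmk : m = k
        · subst hmk
          exact (Bool.eq_not.2 hxk).trans (Bool.eq_not.2 huk.symm).symm
        · rw [← hum m hm hmk]; exact hx m (by simp [hm, hmk])
  · rintro x (hx | hx) m hm
    · rcases Finset.mem_insert.1 hm with rfl | hm
      · by_cases hxa : x = a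
        · subst hxa
          have := aR _ (fLR _ hx) hab
          rw [fl_fl] at this; exact this.symm
        · exact aL x hx hxa
      · exact hLa x hx m hm
    · rcases Finset.mem_insert.1 hm with rfl | hm
      · by_cases hxa : x = b
        · subst hxa
          have := aL _ (fRL _ hx) hba
          rw [fl_fl] at this; exact this.symm
        · exact aR x hx hxa
      · exact hRa x hx m hm
end HC

set_option linter.unusedVariables false
set_option linter.unusedSectionVars false
namespace HC

def TC {V : Type*} (Γ : SimpleGraph V) (S : Set V) (a b : V) : Prop :=
  ∀ U : Set V, U ⊆ S → U.Nonempty → a ∉ U → b ∉ U → (∃ z ∈ S, z ∉ U ∧ z ≠ a ∧ z ≠ b) →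
    ∀ u v, ∃ x ∈ U, ∃ y ∈ S, y ∉ U ∧ y ≠ u ∧ y ≠ v ∧ Γ.Adj x y

structure Cfg {n : ℕ} (Γ : SimpleGraph (Fin n → Bool)) (e : ℕ) (S : Set (Fin n → Bool)) (a b : Fin n → Bool)
    (P D J : Set (Fin n → Bool)) (c : Fin n → Bool) : Prop where
  cub : Cub Γ
  he : 2 ≤ e
  tt : TT Γ e
  tc : TC Γ S a b
  dg : ∀ z ∈ S, z ≠ a → z ≠ b → e + 1 ≤ deg Γ S z
  hS : ∀ x, x ∈ S ↔ x ∈ P ∨ x ∈ D ∨ x ∈ J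
  PD : ∀ x ∈ P, x ∉ D
  PJ : ∀ x ∈ P, x ∉ J
  DJ : ∀ x ∈ D, x ∉ J
  haP : a ∈ P
  hcP : c ∈ P
  hbJ : b ∈ J
  Pcn : Cn Γ P
  Pch : Ch Γ P a c
  Dne : D.Nonempty
  Dcn : Cn Γ D
  Lc : ∀ z ∈ D, ∀ t, z ≠ t → t ≠ c → Conn Γ (insert c D \ {t}) z c
  DP : ∀ x ∈ D, ∀ y ∈ P, Γ.Adj x y → y = c
  D1 : ∀ x ∈ D, ∀ y ∈ J, Γ.Adj x y → ∀ y' ∈ J, Γ.Adj x y' → y = y'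
  Jcn : Cn Γ J
  Jb : Cn Γ (J \ {b})
  Jne : (J \ {b}).Nonempty
  J1 : ∀ x ∈ J, x ≠ b → ∀ y, (y ∈ P ∨ y ∈ D) → Γ.Adj x y → ∀ y', (y' ∈ P ∨ y' ∈ D) → Γ.Adj x y' → y = y'

namespace Cfg
variable {n : ℕ} {Γ : SimpleGraph (Fin n → Bool)} {e : ℕ} {S P D J E : Set (Fin n → Bool)}
  {a b c w x x' y z : Fin n → Bool} 

section
variable (h : Cfg Γ e S a b P D J c)
include h
theorem PS : P ⊆ S := fun x hx => (h.hS x).2 (Or.inl hx)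
theorem DS : D ⊆ S := fun x hx => (h.hS x).2 (Or.inr (Or.inl hx))
theorem JS : J ⊆ S := fun x hx => (h.hS x).2 (Or.inr (Or.inr hx))
theorem aD : a ∉ D := h.PD a h.haP
theorem bD : b ∉ D := fun hb => h.DJ b hb h.hbJ
theorem cD : c ∉ D := h.PD c h.hcP
theorem aJ : a ∉ J := h.PJ a h.haP
theorem cJ : c ∉ J := h.PJ c h.hcP
theorem dgD (hz : z ∈ D) : e + 1 ≤ deg Γ S z :=
  h.dg z (h.DS hz) (fun hh => h.aD (hh ▸ hz)) (fun hh => h.bD (hh ▸ hz))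
theorem dgJ (hz : z ∈ J) (hzb : z ≠ b) : e + 1 ≤ deg Γ S z :=
  h.dg z (h.JS hz) (fun hh => h.aJ (hh ▸ hz)) hzb

theorem outD (hz : z ∈ D) (hy : y ∈ S) (e : Γ.Adj z y) (hn : y ∉ insert c D) : y ∈ J := by
  rcases (h.hS y).1 hy with h1 | h1 | h1
  · exact absurd (Or.inl (h.DP z hz y h1 e)) hn
  · exact absurd (Or.inr h1) hn
  · exact h1

theorem degL (hz : z ∈ D) : e ≤ deg Γ (insert c D) z := by
  have h1 := h.dgD hz
  have h2 : deg Γ S z ≤ deg Γ (insert c D) z + 1 := deg_sub2 (fun y hy e hn y' hy' e' hn' =>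
    h.D1 z hz y (h.outD hz hy e hn) e y' (h.outD hz hy' e' hn') e')
  omega

theorem pieceL (hx : x ∈ D) : LP Γ (insert c D) c x (2 ^ e - 2) ∧
    (¬ (FullSub Γ (insert c D) e ∧ par c = par x) → LP Γ (insert c D) c x (2 ^ e - 1)) :=
  piece h.cub h.tt h.he h.cD h.Dcn h.Lc (fun z hz => h.degL hz) hx

theorem fullL (hF : FullSub Γ (insert c D) e) (hz : z ∈ D) : ∃ y ∈ J, Γ.Adj z y := by
  have h1 := hF.deg_le h.cub (Or.inr hz : z ∈ insert c D)
  obtain ⟨y, hy, hn, e1⟩ := deg_lt (show deg Γ (insert c D) z < deg Γ S z by have := h.dgD hz; omega)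
  exact ⟨y, h.outD hz hy e1 hn, e1⟩
end

section lobe
variable (h : Cfg Γ e S a b P D J c) (hE : MinLobe Γ J b w E)
include h hE

theorem outE (hz : z ∈ E) (hy : y ∈ S) (e : Γ.Adj z y) (hn : y ∉ insert w E) : y ∈ P ∨ y ∈ D := by
  rcases (h.hS y).1 hy with h1 | h1 | h1
  · exact Or.inl h1
  · exact Or.inr h1
  · rcases hE.cl z hz y h1 e with h2 | h2
    · exact absurd (Or.inr h2) hn
    · exact absurd (Or.inl h2) hn

theorem Eb (hz : z ∈ E) : z ≠ b := fun hh => hE.hr (hh ▸ hz)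

theorem degR (hz : z ∈ E) : e ≤ deg Γ (insert w E) z := by
  have h1 := h.dgJ (hE.sub hz) (h.Eb hE hz)
  have h2 : deg Γ S z ≤ deg Γ (insert w E) z + 1 := deg_sub2 (fun y hy e hn y' hy' e' hn' =>
    h.J1 z (hE.sub hz) (h.Eb hE hz) y (h.outE hE hz hy e hn) e y' (h.outE hE hz hy' e' hn') e')
  omega

theorem pieceR (hx : x ∈ E) : LP Γ (insert w E) w x (2 ^ e - 2) ∧
    (¬ (FullSub Γ (insert w E) e ∧ par w = par x) → LP Γ (insert w E) w x (2 ^ e - 1)) :=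
  piece h.cub h.tt h.he hE.hwC hE.cn (fun z hz t hzt htw => hE.conn h.Jcn h.hbJ hz hzt htw)
    (fun z hz => h.degR hE hz) hx

theorem fullR (hF : FullSub Γ (insert w E) e) (hz : z ∈ E) : ∃ y, (y ∈ P ∨ y ∈ D) ∧ Γ.Adj z y := by
  have h1 := hF.deg_le h.cub (Or.inr hz : z ∈ insert w E)
  obtain ⟨y, hy, hn, e1⟩ := deg_lt (show deg Γ (insert w E) z < deg Γ S z by
    have := h.dgJ (hE.sub hz) (h.Eb hE hz); omega)
  exact ⟨y, h.outE hE hz hy e1 hn, e1⟩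

theorem nbrE (t : Fin n → Bool) : ∃ x ∈ E, ∃ y, (y ∈ P ∨ y ∈ D) ∧ y ≠ t ∧ Γ.Adj x y := by
  obtain ⟨d0, hd0⟩ := h.Dne
  obtain ⟨x, hx, y, hy, hyE, hyw, hyt, e1⟩ := h.tc E (hE.sub.trans h.JS) hE.ne (fun hh => h.aJ (hE.sub hh)) hE.hr
    ⟨d0, h.DS hd0, fun hh => h.DJ _ hd0 (hE.sub hh), fun hh => h.aD (hh ▸ hd0), fun hh => h.bD (hh ▸ hd0)⟩ w t
  refine ⟨x, hx, y, h.outE hE hx hy e1 ?_, hyt, e1⟩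
  rintro (h1 | h1)
  · exact hyw h1
  · exact hyE h1

theorem toRoot : Conn Γ (J \ E) w b := (hE.compl_root h.Jcn h.hbJ hE.hr).symm

theorem pathI {k1 kL kR k2 : ℕ} (h1 : LP Γ P a c k1) (h2 : LP Γ (insert c D) c x kL) (e1 : Γ.Adj x x')
    (h3 : LP Γ (insert w E) w x' kR) (h4 : LP Γ (J \ E) w b k2) : LP Γ S a b (k1 + kL + 1 + (kR + k2)) := by
  have g1 := h1.glue h2 (by
    rintro z hz (hz' | hz')
    · exact hz'
    · exact absurd hz' (h.PD z hz))
  have g2 := h3.symm.glue h4 (by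
    rintro z (hz | hz) hz'
    · exact hz
    · exact absurd hz hz'.2)
  refine (g1.edge e1 g2 ?_).mono ?_
  · have hh : ∀ z, z ∈ insert w E ∪ J \ E → z ∈ J := by
      rintro z ((rfl | h1) | h1)
      · exact hE.hw
      · exact hE.sub h1
      · exact h1.1
    rintro z (hz | rfl | hz) hz'
    · exact h.PJ z hz (hh z hz')
    · exact h.cJ (hh _ hz')
    · exact h.DJ z hz (hh z hz')
  · rintro z ((hz | rfl | hz) | (rfl | hz) | hz)
    · exact h.PS hz
    · exact h.PS h.hcP
    · exact h.DS hz
    · exact h.JS hE.hw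
    · exact h.JS (hE.sub hz)
    · exact h.JS hz.1

theorem wb (hw : w = b) : ∀ z ∈ J, z ≠ b → z ∈ E := by
  intro z hz hzb
  subst hw
  obtain ⟨y, hy⟩ := hE.ne
  refine (h.Jb y ⟨hE.sub hy, h.Eb hE hy⟩ z ⟨hz, hzb⟩).closed E hy ?_
  intro p hp _ q hq e1
  exact (hE.cl p hp q hq.1 e1).resolve_right hq.2

theorem caseI (hx : x ∈ D) (hx' : x' ∈ E) (e1 : Γ.Adj x x') :
    LP Γ S a b (2 ^ (e + 1) - 2) ∧ (¬ (FullSub Γ S (e + 1) ∧ par a = par b) → LP Γ S a b (2 ^ (e + 1) - 1)) := by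
  have hf : 4 ≤ 2 ^ e := le_trans (by norm_num) (Nat.pow_le_pow_right (by norm_num) h.he : 2 ^ 2 ≤ 2 ^ e)
  rw [pow_succ]
  suffices hs : LP Γ S a b (2 ^ e * 2 - 1) ∨ (LP Γ S a b (2 ^ e * 2 - 2) ∧
      (¬ (FullSub Γ S (e + 1) ∧ par a = par b) → LP Γ S a b (2 ^ e * 2 - 1))) by
    rcases hs with hs | hs
    · exact ⟨hs.le (by omega), fun _ => hs⟩
    · exact hs
  generalize hfe : 2 ^ e = f at *
  have pL : ∀ {x}, x ∈ D → LP Γ (insert c D) c x (f - 2) := fun hx => hfe ▸ (h.pieceL hx).1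
  have pL' : ∀ {x}, x ∈ D → ¬ (FullSub Γ (insert c D) e ∧ par c = par x) → LP Γ (insert c D) c x (f - 1) :=
    fun hx hn => hfe ▸ (h.pieceL hx).2 hn
  have pR : ∀ {x}, x ∈ E → LP Γ (insert w E) w x (f - 2) := fun hx => hfe ▸ (h.pieceR hE hx).1
  have pR' : ∀ {x}, x ∈ E → ¬ (FullSub Γ (insert w E) e ∧ par w = par x) → LP Γ (insert w E) w x (f - 1) :=
    fun hx hn => hfe ▸ (h.pieceR hE hx).2 hn
  have hPac : Conn Γ P a c := h.Pcn a h.haP c h.hcP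
  have hJE := h.toRoot hE
  have nbrL : ∀ t, FullSub Γ (insert c D) e → ∃ z ∈ D, z ≠ t ∧ Γ.Adj c z := by
    intro t hF
    obtain ⟨z, hz, hzt, e2⟩ := hF.nbr (Set.mem_insert c D) h.he t
    exact ⟨z, hz.resolve_left e2.ne', hzt, e2⟩
  have nbrR : ∀ t, FullSub Γ (insert w E) e → ∃ z ∈ E, z ≠ t ∧ Γ.Adj w z := by
    intro t hF
    obtain ⟨z, hz, hzt, e2⟩ := hF.nbr (Set.mem_insert w E) h.he t
    exact ⟨z, hz.resolve_left e2.ne', hzt, e2⟩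
  have px := par_adj h.cub e1
  by_cases hac : a = c
  · have hPa : ∀ z ∈ P, z = a := by
      intro z hz
      by_contra hza
      obtain ⟨p, hp, q, hq, hqU, hqa, e2⟩ := h.Pch (P \ {a}) Set.sdiff_subset ⟨z, hz, hza⟩ (fun h => h.2 rfl)
        (fun h => h.2 hac.symm) a
      exact hqU ⟨hq, hqa⟩
    by_cases hwb : w = b
    · by_cases eL : FullSub Γ (insert c D) e ∧ par c = par x
      · by_cases eR : FullSub Γ (insert w E) e ∧ par w = par x'
        · -- both
          obtain ⟨z, hz, _, e2⟩ := nbrL c eL.1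
          obtain ⟨z', hz', e3⟩ := h.fullL eL.1 hz
          have p2 := par_adj h.cub e2
          have p3 := par_adj h.cub e3
          have hz'b : z' ≠ b := by
            rintro rfl; rw [← hwb, eR.2, px, p2, ← eL.2] at p3; simp at p3
          have hz'E := h.wb hE hwb z' hz' hz'b
          left
          refine (h.pathI hE hPac (pL' hz ?_) e3 (pR' hz'E ?_) hJE).le (by omega)
          · rintro ⟨_, hh⟩; rw [← hh] at p2; simp at p2
          · rintro ⟨_, hh⟩; rw [eR.2, px, ← eL.2, p3, p2] at hh; simp at hh
        · right
          have hw : LP Γ S a b (f * 2 - 2) :=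
            (h.pathI hE hPac (pL hx) e1 (pR' hx' eR) hJE).le (by omega)
          refine ⟨hw, fun hex => ?_⟩
          by_cases hpar : par a = par b
          swap
          · refine (LP_odd h.cub hw ?_ hpar).le (by omega)
            rw [← Nat.sub_mul f 1 2]; simp
          obtain ⟨z, hz, hzb, e2⟩ : ∃ z ∈ D, ¬ Γ.Adj b z ∧ Γ.Adj c z := by
            by_cases hb : ∃ t ∈ insert c D, Γ.Adj b t
            · obtain ⟨t, ht, hbt⟩ := hb
              obtain ⟨z, hz, hzt, e2⟩ := nbrL t eL.1
              refine ⟨z, hz, fun hbz => hzt ?_, e2⟩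
              refine eL.1.out h.cub ?_ (Or.inr hz) ht hbz hbt
              rintro (hh | hh)
              · exact h.cJ (hh ▸ h.hbJ)
              · exact h.bD hh
            · push Not at hb
              obtain ⟨z, hz, hzt, e2⟩ := nbrL c eL.1
              exact ⟨z, hz, hb z (Or.inr hz), e2⟩
          obtain ⟨z', hz', e3⟩ := h.fullL eL.1 hz
          have p2 := par_adj h.cub e2
          have hz'E := h.wb hE hwb z' hz' (by rintro rfl; exact hzb e3.symm)
          have n1 : ¬ (FullSub Γ (insert c D) e ∧ par c = par z) := by
            rintro ⟨_, hh⟩; rw [← hh] at p2; simp at p2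
          by_cases hR : FullSub Γ (insert w E) e
          · exfalso
            apply hex
            refine ⟨?_, hpar⟩
            have hSeq : S = insert c D ∪ insert w E := by
              ext q
              rw [h.hS]
              constructor
              · rintro (hq | hq | hq)
                · left; left; rw [hPa q hq, hac]
                · left; right; exact hq
                · right
                  by_cases hqb : q = b
                  · left; rw [hqb, hwb]
                  · right; exact h.wb hE hwb q hq hqb
              · rintro ((rfl | hq) | rfl | hq)
                · left; exact h.hcP
                · right; left; exact hq
                · right; right; exact hE.hw
                · right; right; exact hE.sub hq
            have hRJ : ∀ q, q ∈ insert w E ↔ q ∈ J := by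
              intro q; constructor
              · rintro (rfl | hq)
                · exact hE.hw
                · exact hE.sub hq
              · intro hq
                by_cases hqb : q = b
                · left; rw [hqb, hwb]
                · right; exact h.wb hE hwb q hq hqb
            rw [hSeq]
            refine merge h.cub h.he eL.1 hR (a := a) (b := b) ?_ (Or.inl hac) (Or.inl hwb.symm) ?_ ?_ hpar
            · rintro q (rfl | hq) hq'
              · exact h.cJ ((hRJ _).1 hq')
              · exact h.DJ q hq ((hRJ _).1 hq')
            · rintro q hq hqa
              obtain ⟨y, hy, e4⟩ := h.fullL eL.1 (hq.resolve_left (fun hh => hqa (hh.trans hac.symm)))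
              exact ⟨y, (hRJ y).2 hy, e4⟩
            · rintro q hq hqb
              obtain ⟨y, hy, e4⟩ := h.fullR hE hR (hq.resolve_left (fun hh => hqb (hh.trans hwb)))
              refine ⟨y, ?_, e4⟩
              rcases hy with hy | hy
              · left; rw [hPa y hy, hac]
              · right; exact hy
          · exact (h.pathI hE hPac (pL' hz n1) e3 (pR' hz'E (fun hh => hR hh.1)) hJE).le (by omega)
      · by_cases eR : FullSub Γ (insert w E) e ∧ par w = par x'
        · right
          have hw : LP Γ S a b (f * 2 - 2) :=
            (h.pathI hE hPac (pL' hx eL) e1 (pR hx') hJE).le (by omega)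
          refine ⟨hw, fun hex => ?_⟩
          by_cases hpar : par a = par b
          swap
          · refine (LP_odd h.cub hw ?_ hpar).le (by omega)
            rw [← Nat.sub_mul f 1 2]; simp
          obtain ⟨z, hz, hzb, e2⟩ : ∃ z ∈ E, ¬ Γ.Adj a z ∧ Γ.Adj w z := by
            by_cases hb : ∃ t ∈ insert w E, Γ.Adj a t
            · obtain ⟨t, ht, hbt⟩ := hb
              obtain ⟨z, hz, hzt, e2⟩ := nbrR t eR.1
              refine ⟨z, hz, fun hbz => hzt ?_, e2⟩
              refine eR.1.out h.cub ?_ (Or.inr hz) ht hbz hbt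
              rintro (hh | hh)
              · exact h.aJ (hh ▸ hE.hw)
              · exact h.aJ (hE.sub hh)
            · push Not at hb
              obtain ⟨z, hz, hzt, e2⟩ := nbrR w eR.1
              exact ⟨z, hz, hb z (Or.inr hz), e2⟩
          obtain ⟨z', hz', e3⟩ := h.fullR hE eR.1 hz
          have p2 := par_adj h.cub e2
          have hz'D : z' ∈ D := by
            rcases hz' with hh | hh
            · exact absurd (hPa z' hh ▸ e3.symm) hzb
            · exact hh
          have n1 : ¬ (FullSub Γ (insert w E) e ∧ par w = par z) := by
            rintro ⟨_, hh⟩; rw [← hh] at p2; simp at p2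
          by_cases hL : FullSub Γ (insert c D) e
          · exfalso
            apply hex
            refine ⟨?_, hpar⟩
            have hSeq : S = insert c D ∪ insert w E := by
              ext q
              rw [h.hS]
              constructor
              · rintro (hq | hq | hq)
                · left; left; rw [hPa q hq, hac]
                · left; right; exact hq
                · right
                  by_cases hqb : q = b
                  · left; rw [hqb, hwb]
                  · right; exact h.wb hE hwb q hq hqb
              · rintro ((rfl | hq) | rfl | hq)
                · left; exact h.hcP
                · right; left; exact hq
                · right; right; exact hE.hw
                · right; right; exact hE.sub hq
            have hRJ : ∀ q, q ∈ insert w E ↔ q ∈ J := by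
              intro q; constructor
              · rintro (rfl | hq)
                · exact hE.hw
                · exact hE.sub hq
              · intro hq
                by_cases hqb : q = b
                · left; rw [hqb, hwb]
                · right; exact h.wb hE hwb q hq hqb
            rw [hSeq]
            refine merge h.cub h.he hL eR.1 (a := a) (b := b) ?_ (Or.inl hac) (Or.inl hwb.symm) ?_ ?_ hpar
            · rintro q (rfl | hq) hq'
              · exact h.cJ ((hRJ _).1 hq')
              · exact h.DJ q hq ((hRJ _).1 hq')
            · rintro q hq hqa
              obtain ⟨y, hy, e4⟩ := h.fullL hL (hq.resolve_left (fun hh => hqa (hh.trans hac.symm)))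
              exact ⟨y, (hRJ y).2 hy, e4⟩
            · rintro q hq hqb
              obtain ⟨y, hy, e4⟩ := h.fullR hE eR.1 (hq.resolve_left (fun hh => hqb (hh.trans hwb)))
              refine ⟨y, ?_, e4⟩
              rcases hy with hy | hy
              · left; rw [hPa y hy, hac]
              · right; exact hy
          · exact (h.pathI hE hPac (pL' hz'D (fun hh => hL hh.1)) e3.symm (pR' hz n1) hJE).le (by omega)
        · left
          exact (h.pathI hE hPac (pL' hx eL) e1 (pR' hx' eR) hJE).le (by omega)
    · left
      have hJE1 := hJE.one hwb
      by_cases eL : FullSub Γ (insert c D) e ∧ par c = par x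
      · by_cases eR : FullSub Γ (insert w E) e ∧ par w = par x'
        · obtain ⟨y, hy, _, e2⟩ := nbrR w eR.1
          obtain ⟨y', hy', e3⟩ := h.fullR hE eR.1 hy
          have p2 := par_adj h.cub e2
          have p3 := par_adj h.cub e3
          have hy'D : y' ∈ D := by
            refine hy'.resolve_left (fun hh => ?_)
            rw [hPa y' hh, hac, eL.2, p2, eR.2, px] at p3
            simp at p3
          refine (h.pathI hE hPac (pL hy'D) e3.symm (pR' hy ?_) hJE1).le (by omega)
          rintro ⟨_, hh⟩; rw [← hh] at p2; simp at p2
        · exact (h.pathI hE hPac (pL hx) e1 (pR' hx' eR) hJE1).le (by omega)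
      · exact (h.pathI hE hPac (pL' hx eL) e1 (pR hx') hJE1).le (by omega)
  · left
    have hPac1 := hPac.one hac
    by_cases hwb : w = b
    · by_cases eL : FullSub Γ (insert c D) e ∧ par c = par x
      · by_cases eR : FullSub Γ (insert w E) e ∧ par w = par x'
        · obtain ⟨z, hz, _, e2⟩ := nbrL c eL.1
          obtain ⟨z', hz', e3⟩ := h.fullL eL.1 hz
          have p2 := par_adj h.cub e2
          have p3 := par_adj h.cub e3
          have hz'b : z' ≠ b := by
            rintro rfl; rw [← hwb, eR.2, px, p2, ← eL.2] at p3; simp at p3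
          have hz'E := h.wb hE hwb z' hz' hz'b
          refine (h.pathI hE hPac1 (pL' hz ?_) e3 (pR hz'E) hJE).le (by omega)
          rintro ⟨_, hh⟩; rw [← hh] at p2; simp at p2
        · exact (h.pathI hE hPac1 (pL hx) e1 (pR' hx' eR) hJE).le (by omega)
      · exact (h.pathI hE hPac1 (pL' hx eL) e1 (pR hx') hJE).le (by omega)
    · exact (h.pathI hE hPac1 (pL hx) e1 (pR hx') (hJE.one hwb)).le (by omega)
end lobe
end Cfg
end HC

set_option linter.unusedVariables false
set_option linter.unusedSectionVars false
namespace HC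
section gen
variable {V : Type*} {G : SimpleGraph V} {J C C' E : Set V} {r w s z u v s' x0 c1 : V}

theorem Lobe.strip (h : Lobe G J r w E) (hu : u ∉ E) (hv : v ∉ E) (hc : Conn G (J \ {s'}) u v) :
    Conn G ((J \ E) \ {s'}) u v := by
  have : v ∈ reach G ((J \ E) \ {s'}) u ∪ {y | y ∈ E ∧ w ∈ reach G ((J \ E) \ {s'}) u} := by
    refine hc.closed _ (Or.inl (reach_self ⟨⟨hc.left.1, hu⟩, hc.left.2⟩)) ?_
    rintro x (hx | ⟨hx, hw⟩) hxJ y hy e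
    · by_cases hyE : y ∈ E
      · right
        rcases h.cl y hyE x hxJ.1 e.symm with h1 | rfl
        · exact absurd h1 (reach_sub hx).1.2
        · exact ⟨hyE, hx⟩
      · exact Or.inl (reach_closed hx ⟨⟨hy.1, hyE⟩, hy.2⟩ e)
    · rcases h.cl x hx y hy.1 e with h1 | rfl
      · exact Or.inr ⟨h1, hw⟩
      · exact Or.inl hw
  rcases this with h1 | h1
  · exact h1
  · exact absurd h1.1 hv

theorem Lobe.sub_of_meet (h : Lobe G J r s C) (h' : Lobe G J r s C') (hz : z ∈ C) (hz' : z ∈ C') : C ⊆ C' := by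
  intro y hy
  refine (h.cn z hz y hy).closed C' hz' ?_
  intro p hp _ q hq e
  exact (h'.cl p hp q (h.sub hq) e).resolve_right (fun hh => h.hwC (hh ▸ hq))

theorem Lobe.root_in (hJ : Cn G J) (hr : r ∈ J) (h : Lobe G J r s C) (hx0 : x0 ∈ C) (h1 : Lobe G J r c1 E)
    (hE : E ⊆ C) (hx : x0 ∉ E) : c1 ∈ C := by
  obtain ⟨x, hxE, e⟩ := h1.adj hJ hr
  rcases h.cl x (hE hxE) c1 h1.hw e with hh | rfl
  · exact hh
  · exfalso
    exact hx (h.sub_of_meet h1 (hE hxE) hxE hx0)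
end gen

namespace Cfg
variable {n : ℕ} {Γ : SimpleGraph (Fin n → Bool)} {e : ℕ} {S P D J E : Set (Fin n → Bool)}
  {a b c w x x' y z : Fin n → Bool} 

/-- the neighbours of D in J -/
def X (Γ : SimpleGraph (Fin n → Bool)) (D J : Set (Fin n → Bool)) : Set (Fin n → Bool) :=
  {y | y ∈ J ∧ ∃ x ∈ D, Γ.Adj x y}

def B (Γ : SimpleGraph (Fin n → Bool)) (J : Set (Fin n → Bool)) (b s : Fin n → Bool) : Set (Fin n → Bool) :=
  {z | z = s ∨ (z ∈ J ∧ ¬ Conn Γ (J \ {s}) z b)}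

def II (Γ : SimpleGraph (Fin n → Bool)) (D J : Set (Fin n → Bool)) (b : Fin n → Bool) : Prop :=
  ∀ w E, MinLobe Γ J b w E → ∀ x ∈ E, x ∉ X Γ D J

section
variable (h : Cfg Γ e S a b P D J c)
include h

theorem f4 : 4 ≤ 2 ^ e := le_trans (by norm_num) (Nat.pow_le_pow_right (by norm_num) h.he : 2 ^ 2 ≤ 2 ^ e)

theorem nbrD (t : Fin n → Bool) : ∃ y ∈ X Γ D J, y ≠ t := by
  obtain ⟨j, hj⟩ := h.Jne
  obtain ⟨x, hx, y, hy, hyD, hyc, hyt, e1⟩ := h.tc D h.DS h.Dne h.aD h.bD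
    ⟨j, h.JS hj.1, fun hh => h.DJ _ hh hj.1, fun hh => h.aJ (hh ▸ hj.1), hj.2⟩ c t
  refine ⟨y, ⟨h.outD hx hy e1 ?_, x, hx, e1⟩, hyt⟩
  rintro (h1 | h1)
  · exact hyc h1
  · exact hyD h1

theorem Xuniq (hy : y ∈ J) (hyb : y ≠ b) (hx : x ∈ D) (hz : z ∈ D) (e1 : Γ.Adj x y) (e2 : Γ.Adj z y) : x = z :=
  h.J1 y hy hyb x (Or.inr hx) e1.symm z (Or.inr hz) e2.symm

theorem exists_s : ∃ s ∈ J, X Γ D J ⊆ B Γ J b s ∧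
    ∀ s' ∈ B Γ J b s, s' ≠ s → ∃ x ∈ X Γ D J, Conn Γ (J \ {s'}) x b := by
  obtain ⟨s, hs, hmin⟩ := Set.exists_min_image {s | s ∈ J ∧ X Γ D J ⊆ B Γ J b s} (fun s => (B Γ J b s).ncard)
    (Set.toFinite _) ⟨b, h.hbJ, fun x hx => Or.inr ⟨hx.1, fun hc => hc.right.2 rfl⟩⟩
  refine ⟨s, hs.1, hs.2, ?_⟩
  intro s' hs' hne
  by_contra hno
  push Not at hno
  have hs'2 := hs'.resolve_left hne
  have hXs' : X Γ D J ⊆ B Γ J b s' := fun x hx => by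
    exact Or.inr ⟨hx.1, hno x hx⟩
  have hsub : B Γ J b s' ⊆ B Γ J b s := by
    rintro z (rfl | ⟨hz, hzc⟩)
    · exact hs'
    · by_cases hzs : z = s
      · exact Or.inl hzs
      right
      refine ⟨hz, fun hc => hzc ?_⟩
      have := reach_conn (G := Γ) (show z ∈ reach Γ (J \ {s}) b from hc.symm)
      refine (this.mono ?_).symm
      intro q hq
      refine ⟨(reach_sub hq).1, ?_⟩
      rintro rfl
      exact hs'2.2 (LP.symm hq)
  have hss : s ∉ B Γ J b s' := by
    rintro (hh | ⟨_, hh⟩)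
    · exact hne hh.symm
    apply hh
    by_cases hsb : s = b
    · rw [hsb]; exact LP.refl ⟨h.hbJ, fun hh => hne (hh ▸ hsb.symm)⟩
    obtain ⟨p, hp, hpJ, q, hq, hqA, e1⟩ := (h.Jcn b h.hbJ s hs.1).cross (reach Γ (J \ {s}) b)
      (reach_self ⟨h.hbJ, fun hh => hsb hh.symm⟩) (fun hh => (reach_sub hh).2 rfl)
    have hqs : q = s := by
      by_contra hqs; exact hqA (reach_closed hp ⟨hq, hqs⟩ e1)
    subst hqs
    have h1 := (reach_conn hp).mono (T := J \ {s'}) (by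
      intro t ht
      refine ⟨(reach_sub ht).1, ?_⟩
      rintro rfl
      exact hs'2.2 (LP.symm ht))
    exact (h1.snoc e1 ⟨hq, hne.symm⟩).symm
  have := hmin s' ⟨hs'2.1, hXs'⟩
  have h2 := Set.ncard_lt_ncard (hsub.ssubset_of_ne (fun hh => hss (hh ▸ Or.inl rfl))) (Set.toFinite _)
  omega

theorem fanP {y1 y2 : Fin n → Bool} (hy1 : y1 ∈ P) (hy2 : y2 ∈ P) (hne : y1 ≠ y2) : 
    ∃ S1 S2 : Set (Fin n → Bool), S1 ⊆ P ∧ S2 ⊆ P ∧ (∀ x ∈ S1, x ∉ S2) ∧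
      ((Conn Γ S1 y1 a ∧ Conn Γ S2 y2 c) ∨ (Conn Γ S1 y1 c ∧ Conn Γ S2 y2 a)) := by
  apply menger hy1 hy2
  intro s
  obtain ⟨u, hu, hus⟩ : ∃ u, (u = y1 ∨ u = y2) ∧ u ≠ s := by
    by_cases h1 : y1 = s
    · exact ⟨y2, Or.inr rfl, fun hh => hne (h1.trans hh.symm)⟩
    · exact ⟨y1, Or.inl rfl, h1⟩
  have huP : u ∈ P := by rcases hu with rfl | rfl <;> assumption
  refine ⟨u, hu, ?_⟩
  by_contra hno
  push Not at hno
  obtain ⟨p, hp, q, hq, hqU, hqs, e1⟩ := h.Pch (reach Γ (P \ {s}) u) (fun x hx => (reach_sub hx).1)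
    ⟨u, reach_self ⟨huP, hus⟩⟩ (hno a (Or.inl rfl)) (hno c (Or.inr rfl)) s
  exact hqU (reach_closed hp ⟨hq, hqs⟩ e1)

variable (hII : II Γ D J b)
include hII

theorem nbrEP (hE : MinLobe Γ J b w E) (t : Fin n → Bool) : ∃ x ∈ E, ∃ y ∈ P, y ≠ t ∧ Γ.Adj x y := by
  obtain ⟨x, hx, y, hy, hyt, e1⟩ := h.nbrE hE t
  rcases hy with hy | hy
  · exact ⟨x, hx, y, hy, hyt, e1⟩
  · exact absurd ⟨hE.sub hx, y, hy, e1.symm⟩ (hII w E hE x hx)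
end

section A
variable (h : Cfg Γ e S a b P D J c) (hII : II Γ D J b)
include h hII

theorem caseA {s c1 c2 x1 y1 y1' y2 y2' : Fin n → Bool} {C1 E1 E2 T1 T2 : Set (Fin n → Bool)}
    (hmin : ∀ s' ∈ B Γ J b s, s' ≠ s → ∃ x ∈ X Γ D J, Conn Γ (J \ {s'}) x b)
    (hC1 : Lobe Γ J b s C1) (hx1 : x1 ∈ C1) (hx1X : x1 ∈ X Γ D J)
    (hE1 : MinLobe Γ J b c1 E1) (hE1C : E1 ⊆ C1)
    (hE2 : MinLobe Γ J b c2 E2) (hne : E1 ≠ E2)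
    (hy1 : y1 ∈ E1) (hy2 : y2 ∈ E2) (e1 : Γ.Adj y1' y1) (e2 : Γ.Adj y2' y2)
    (hT1 : T1 ⊆ P) (hT2 : T2 ⊆ P) (hT : ∀ x ∈ T1, x ∉ T2) (t1 : Conn Γ T1 a y1') (t2 : Conn Γ T2 y2' c) :
    LP Γ S a b (2 ^ (e + 1) - 1) := by
  have hf := h.f4
  obtain ⟨δ, hδ⟩ := h.Dne
  have hδJ := h.DJ δ hδ
  have hd := MinLobe.disj h.Jcn h.hbJ hE1 hE2 hne
  have hr1 := MinLobe.root_not h.Jcn h.hbJ hE1 hE2 hne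
  have hr2 := MinLobe.root_not h.Jcn h.hbJ hE2 hE1 hne.symm
  have hcJ := MinLobe.compl_two h.Jcn h.hbJ hE1 hE2 hne
  have hX1 := hII c1 E1 hE1
  have hX2 := hII c2 E2 hE2
  have hc1C : c1 ∈ C1 := Lobe.root_in h.Jcn h.hbJ hC1 hx1 hE1.toLobe hE1C (fun hh => hX1 _ hh hx1X)
  have hl2 : Lobe Γ (J \ E1) b c2 E2 := by
    refine ⟨⟨hE2.hw, hr2⟩, hE2.ne, ?_, hE2.hwC, hE2.hr, hE2.cn, ?_⟩
    · intro x hx; exact ⟨hE2.sub hx, fun h => hd x h hx⟩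
    · intro x hx y hy e; exact hE2.cl x hx y hy.1 e
  have strip2 : ∀ {u v s'}, u ∉ E1 → u ∉ E2 → v ∉ E1 → v ∉ E2 → Conn Γ (J \ {s'}) u v →
      Conn Γ (((J \ E1) \ E2) \ {s'}) u v := fun h1 h2 h3 h4 hc => hl2.strip h2 h4 (hE1.toLobe.strip h1 h3 hc)
  let G2 : SimpleGraph (Fin n → Bool) := Γ ⊔ SimpleGraph.fromRel (fun p q => p = δ ∧ q ∈ X Γ D J)
  have hG2 : ∀ {p q}, G2.Adj p q ↔ Γ.Adj p q ∨ (p ≠ q ∧ ((p = δ ∧ q ∈ X Γ D J) ∨ (q = δ ∧ p ∈ X Γ D J))) := by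
    intro p q; simp [G2, SimpleGraph.sup_adj, SimpleGraph.fromRel_adj]
  have hXδ : ∀ {x}, x ∈ X Γ D J → G2.Adj x δ := by
    intro x hx
    exact hG2.2 (Or.inr ⟨fun hh => hδJ (hh ▸ hx.1), Or.inr ⟨rfl, hx⟩⟩)
  have up : ∀ {u v s'}, Conn Γ (((J \ E1) \ E2) \ {s'}) u v → Conn G2 (insert δ ((J \ E1) \ E2) \ {s'}) u v := by
    intro u v s' hc
    refine LP.mono (hc.gmono (fun x _ y _ e => hG2.2 (Or.inl e))) ?_
    intro x hx; exact ⟨Or.inr hx.1, hx.2⟩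
  have c1J : c1 ∈ (J \ E1) \ E2 := ⟨⟨hE1.hw, hE1.hwC⟩, hr1⟩
  have c2J : c2 ∈ (J \ E1) \ E2 := ⟨⟨hE2.hw, hr2⟩, hE2.hwC⟩
  have bJ : b ∈ (J \ E1) \ E2 := ⟨⟨h.hbJ, hE1.hr⟩, hE2.hr⟩
  have men := menger (G := G2) (S := insert δ ((J \ E1) \ E2)) (p := c1) (q := b) (r := c2) (t := δ)
    (Or.inr c1J) (Or.inr bJ) (by
      intro s'
      by_cases hs'J : s' ∈ J
      · have hs'δ : δ ≠ s' := fun hh => hδJ (hh ▸ hs'J)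
        by_cases hex : ∃ x ∈ X Γ D J, Conn Γ (J \ {s'}) x b
        · obtain ⟨x, hx, hc⟩ := hex
          have := up (strip2 (fun hh => hX1 x hh hx) (fun hh => hX2 x hh hx) hE1.hr hE2.hr hc)
          exact ⟨b, Or.inr rfl, δ, Or.inr rfl, this.symm.snoc (hXδ hx) ⟨Or.inl rfl, hs'δ⟩⟩
        · have hs'C : s' ∉ C1 := by
            intro hh
            apply hex
            exact hmin s' (Or.inr ⟨hC1.sub hh, hC1.not_conn hh⟩) (fun h' => hC1.hwC (h' ▸ hh))
          have h1 := (hC1.cn c1 hc1C x1 hx1).mono (T := J \ {s'}) (fun x hx => ⟨hC1.sub hx, fun hh => hs'C (hh ▸ hx)⟩)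
          have := up (strip2 hE1.hwC hr1 (fun hh => hX1 _ hh hx1X) (fun hh => hX2 _ hh hx1X) h1)
          exact ⟨c1, Or.inl rfl, δ, Or.inr rfl, this.snoc (hXδ hx1X) ⟨Or.inl rfl, hs'δ⟩⟩
      · refine ⟨c1, Or.inl rfl, c2, Or.inl rfl, up ((hcJ c1 c1J c2 c2J).mono ?_)⟩
        intro x hx; exact ⟨hx, fun hh => hs'J (hh ▸ hx.1.1)⟩)
  obtain ⟨S1, S2, hS1, hS2, hS, hcase⟩ := men
  have down : ∀ {T u v}, δ ∉ T → Conn G2 T u v → Conn Γ T u v := by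
    intro T u v hT hc
    refine hc.gmono ?_
    intro x hx y hy e
    rcases hG2.1 e with h1 | ⟨_, ⟨rfl, _⟩ | ⟨rfl, _⟩⟩
    · exact h1
    · exact absurd hx hT
    · exact absurd hy hT
  have toX : ∀ {T u}, T ⊆ insert δ ((J \ E1) \ E2) → u ≠ δ → Conn G2 T u δ → ∃ x' ∈ J, (∃ x ∈ D, Γ.Adj x x') ∧ Conn Γ (T \ {δ}) u x' := by
    intro T u hT hu hc
    obtain ⟨p, hp, hpT, q, hq, hqA, e3⟩ := hc.cross {z | Conn Γ (T \ {δ}) u z} (LP.refl ⟨hc.left, hu⟩)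
      (fun hh => (LP.right hh).2 rfl)
    have hp' : Conn Γ (T \ {δ}) u p := hp
    have hpδ : p ≠ δ := hp'.right.2
    have hpJ : p ∈ J := ((hT hpT).resolve_left hpδ).1.1
    have hqδ : q = δ := by
      by_contra hqδ
      rcases hG2.1 e3 with h1 | ⟨_, ⟨h1, _⟩ | ⟨h1, _⟩⟩
      · exact hqA (hp'.snoc h1 ⟨hq, hqδ⟩)
      · exact hpδ h1
      · exact hqδ h1
    subst hqδ
    refine ⟨p, hpJ, ?_, hp⟩
    rcases hG2.1 e3 with h1 | ⟨_, ⟨h1, _⟩ | ⟨_, h1⟩⟩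
    · exact ⟨q, hδ, h1.symm⟩
    · exact absurd h1 hpδ
    · exact h1.2
  have hδ1 : c1 ≠ δ := fun hh => hδJ (hh ▸ hE1.hw)
  have hδb : b ≠ δ := fun hh => hδJ (hh ▸ h.hbJ)
  have q1 := (h.pieceR hE1 hy1).1
  have q2 := (h.pieceR hE2 hy2).1
  have hPJ := h.PJ
  have hPD := h.PD
  have hDJ := h.DJ
  have hT1a : ∀ x ∈ T1, x ∈ P := fun x hx => hT1 hx
  have hT2a : ∀ x ∈ T2, x ∈ P := fun x hx => hT2 hx
  have hE1J : ∀ x ∈ E1, x ∈ J := fun x hx => hE1.sub hx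
  have hE2J : ∀ x ∈ E2, x ∈ J := fun x hx => hE2.sub hx
  have hPS : ∀ x ∈ P, x ∈ S := fun x hx => h.PS hx
  have hJS : ∀ x ∈ J, x ∈ S := fun x hx => h.JS hx
  have hDS : ∀ x ∈ D, x ∈ S := fun x hx => h.DS hx
  have hS1a : ∀ x ∈ S1, x ≠ δ → x ∈ J ∧ x ∉ E1 ∧ x ∉ E2 := fun x hx hh => by
    have := (hS1 hx).resolve_left hh; exact ⟨this.1.1, this.1.2, this.2⟩
  have hS2a : ∀ x ∈ S2, x ≠ δ → x ∈ J ∧ x ∉ E1 ∧ x ∉ E2 := fun x hx hh => by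
    have := (hS2 hx).resolve_left hh; exact ⟨this.1.1, this.1.2, this.2⟩
  have k1 := hE1.hwC
  have k2 := hE2.hwC
  have k3 := hE1.hw
  have k4 := hE2.hw
  have hcT2 : c ∈ T2 := t2.right
  have hcD := h.cD
  rcases hcase with ⟨g1, g2⟩ | ⟨g1, g2⟩
  · have hδS1 : δ ∉ S1 := fun hh => hS _ hh g2.right
    obtain ⟨x', hx'J, ⟨x, hx, e3⟩, g3⟩ := toX hS2 hδb g2
    have g1 := down hδS1 g1
    have l := (h.pieceL hx).1
    have m1 := q1.symm.glue g1 (by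
      clear * - hS1a hδS1
      grind)
    have m2 := m1.glue q2 (by
      clear * - hS1a hδS1 hd hr1 hE1J hE2J hr2
      grind)
    have m3 := t1.edge e1 m2 (by
      clear * - hS1a hδS1 hE1J hE2J hT1a hPJ k3 k4
      grind)
    have m4 := m3.edge e2.symm t2 (by
      clear * - hS1a hδS1 hE1J hE2J hT1a hT2a hPJ k3 k4 hT
      grind)
    have m5 := m4.glue l (by
      clear * - hS1a hδS1 hE1J hE2J hT1a hT2a hPJ hPD hDJ k3 k4 hT hcT2
      grind)
    have m6 := m5.edge e3 g3.symm (by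
      have hh : ∀ z ∈ S2 \ {δ}, z ∈ J ∧ z ∉ E1 ∧ z ∉ E2 ∧ z ∉ S1 := fun z hz => by
        have := hS2a z hz.1 hz.2
        exact ⟨this.1, this.2.1, this.2.2, fun h' => hS z h' hz.1⟩
      have c1S := g1.left
      have c2S := g1.right
      clear * - hh hE1J hE2J hT1a hT2a hPJ hPD hDJ c1S c2S hcT2
      grind)
    refine (m6.mono ?_).le (by rw [pow_succ]; omega)
    clear * - hS1a hS2a hδS1 hE1J hE2J hT1a hT2a hPS hJS hDS k3 k4 hcT2
    intro z hz
    grind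
  · have hδS2 : δ ∉ S2 := fun hh => hS _ g1.right hh
    obtain ⟨x', hx'J, ⟨x, hx, e3⟩, g3⟩ := toX hS1 hδ1 g1
    have g2 := down hδS2 g2
    have l := (h.pieceL hx).1
    have m1 := q1.symm.glue g3 (by
      clear * - hS1a
      grind)
    have m2 := t1.edge e1 m1 (by
      clear * - hS1a hE1J hE2J hT1a hPJ k3 k4
      grind)
    have m3 := m2.edge e3.symm l.symm (by
      clear * - hS1a hE1J hE2J hT1a hT2a hPJ hPD hDJ k3 k4 hT hcT2
      grind)
    have m4 := m3.glue t2.symm (by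
      clear * - hS1a hE1J hE2J hT1a hT2a hPJ hPD hDJ k3 k4 hT hcT2
      grind)
    have m5 := q2.symm.glue g2.symm (by
      clear * - hS2a hδS2
      grind)
    have m6 := m4.edge e2 m5 (by
      have c2S := g2.right
      have c1S := g3.left
      have hh : ∀ z ∈ S2, z ∈ J ∧ z ∉ E1 ∧ z ∉ E2 ∧ z ∉ S1 := fun z hz => by
        have := hS2a z hz (fun hh => hδS2 (hh ▸ hz))
        exact ⟨this.1, this.2.1, this.2.2, fun h' => hS z h' hz⟩
      clear * - hh hS1a hE1J hE2J hT1a hT2a hPJ hPD hDJ hcT2 k4 k3 hd c2S c1S hr1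
      grind)
    refine (m6.mono ?_).le (by rw [pow_succ]; omega)
    clear * - hS1a hS2a hδS2 hE1J hE2J hT1a hT2a hPS hJS hDS k3 k4 hcT2
    have hT1S : T1 ⊆ S := fun z hz => hPS z (hT1a z hz)
    have hT2S : T2 ⊆ S := fun z hz => hPS z (hT2a z hz)
    refine Set.union_subset (Set.union_subset (Set.union_subset (Set.union_subset hT1S (Set.union_subset ?_ ?_)) ?_) hT2S) (Set.union_subset ?_ ?_)
    · exact Set.insert_subset (hJS _ k3) (fun z hz => hJS _ (hE1J z hz))
    · intro z hz; exact hJS _ (hS1a z hz.1 hz.2).1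
    · exact Set.insert_subset (hT2S hcT2) hDS
    · exact Set.insert_subset (hJS _ k4) (fun z hz => hJS _ (hE2J z hz))
    · intro z hz; exact hJS _ (hS2a z hz (fun hh => hδS2 (hh ▸ hz))).1
end A
end Cfg
end HC

set_option linter.unusedVariables false
set_option linter.unusedSectionVars false
namespace HC
namespace Cfg
variable {n : ℕ} {Γ : SimpleGraph (Fin n → Bool)} {e : ℕ} {S P D J E C : Set (Fin n → Bool)}
  {a b c w x x' y z s c1 : Fin n → Bool} 

section
variable (h : Cfg Γ e S a b P D J c) (hII : II Γ D J b)
include h hII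

theorem start (hE : MinLobe Γ J b c1 E) : ∃ y ∈ E, ∃ y' ∈ P, y' ≠ a ∧ Γ.Adj y' y ∧
    LP Γ (insert c1 E) c1 y (2 ^ e - 1) := by
  by_cases hF : FullSub Γ (insert c1 E) e
  · have hc1 : c1 ∈ insert c1 E := Or.inl rfl
    have haE : a ∉ insert c1 E := by
      rintro (hh | hh)
      · exact h.aJ (hh ▸ hE.hw)
      · exact h.aJ (hE.sub hh)
    obtain ⟨y1, hy1, _, e1⟩ := hF.nbr hc1 h.he c1
    obtain ⟨y2, hy2, hne, e2⟩ := hF.nbr hc1 h.he y1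
    obtain ⟨y, hy, ey, hna⟩ : ∃ y ∈ insert c1 E, Γ.Adj c1 y ∧ ¬ Γ.Adj a y := by
      by_cases h1 : Γ.Adj a y1
      · exact ⟨y2, hy2, e2, fun h2 => hne (hF.out h.cub haE hy2 hy1 h2 h1)⟩
      · exact ⟨y1, hy1, e1, h1⟩
    have hyE : y ∈ E := hy.resolve_left ey.ne.symm
    obtain ⟨y', hy', e3⟩ := h.fullR hE hF hyE
    have hyP : y' ∈ P := by
      rcases hy' with hh | hh
      · exact hh
      · exact absurd ⟨hE.sub hyE, y', hh, e3.symm⟩ (hII c1 E hE y hyE)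
    refine ⟨y, hyE, y', hyP, ?_, e3.symm, (h.pieceR hE hyE).2 ?_⟩
    · rintro rfl; exact hna e3.symm
    · rintro ⟨_, hp⟩
      rw [par_adj h.cub ey] at hp; simp at hp
  · obtain ⟨y, hy, y', hy', hne, e1⟩ := h.nbrEP hII hE a
    exact ⟨y, hy, y', hy', hne, e1.symm, (h.pieceR hE hy).2 (fun hh => hF hh.1)⟩

theorem caseB1 (hC : Lobe Γ J b s C) (hE : MinLobe Γ J b c1 E) (hEC : E ⊆ C) (hc1 : c1 ∈ C)
    (hu : ∀ w E', MinLobe Γ J b w E' → E' ⊆ C → E' = E) (hxC : x ∈ C) (hxE : x ∉ E) (hxc : x ≠ c1) :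
    LP Γ S a b (2 ^ (e + 1) - 1) := by
  have hf := h.f4
  have hsC := hC.hwC
  have hgood : Good Γ e (insert s C \ E) s c1 := by
    refine ⟨⟨Or.inl rfl, fun hh => hsC (hEC hh)⟩, ⟨Or.inr hc1, hE.hwC⟩, fun hh => hsC (hh ▸ hc1), ?_, ?_, ?_⟩
    · have : ({s, c1, x} : Set (Fin n → Bool)) ⊆ insert s C \ E := by
        rintro q (rfl | rfl | rfl)
        · exact ⟨Or.inl rfl, fun hh => hsC (hEC hh)⟩
        · exact ⟨Or.inr hc1, hE.hwC⟩
        · exact ⟨Or.inr hxC, hxE⟩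
      have h3 := Set.ncard_le_ncard this (Set.toFinite _)
      rw [Set.ncard_eq_three.2 ⟨s, c1, x, fun hh => hsC (hh ▸ hc1), fun hh => hsC (hh ▸ hxC), hxc.symm, rfl⟩] at h3
      exact h3
    · intro U hU hne hsU hcU t
      by_contra hno
      push Not at hno
      have hUC : ∀ q ∈ U, q ∈ C ∧ q ∉ E := fun q hq =>
        ⟨(hU hq).1.resolve_left (fun hh => hsU (hh ▸ hq)), (hU hq).2⟩
      have hcl : ∀ q ∈ U, ∀ y ∈ J, Γ.Adj q y → y ∈ U ∨ y = t := by
        intro q hq y hy e1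
        by_contra hh
        push Not at hh
        refine hno q hq y ⟨?_, ?_⟩ hh.1 hh.2 e1
        · rcases hC.cl q (hUC q hq).1 y hy e1 with h1 | h1
          · exact Or.inr h1
          · exact Or.inl h1
        · intro hyE
          rcases hE.cl y hyE q (hC.sub (hUC q hq).1) e1.symm with h1 | h1
          · exact (hUC q hq).2 h1
          · exact hcU (h1 ▸ hq)
      obtain ⟨z, hz⟩ := hne
      obtain ⟨p, hp, hpJ, q, hq, hqU, e1⟩ := (h.Jcn z (hC.sub (hUC z hz).1) s hC.hw).cross U hz hsU
      have hqt : q = t := (hcl p hp q hq e1).resolve_left hqU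
      subst hqt
      have hK : Lobe Γ J b q (reach Γ U z) := by
        refine ⟨hq, ⟨z, reach_self hz⟩, fun v hv => hC.sub (hUC v (reach_sub hv)).1, fun hh => hqU (reach_sub hh),
          fun hh => hC.hr (hUC _ (reach_sub hh)).1, reach_Cn, ?_⟩
        intro v hv y hy e2
        rcases hcl v (reach_sub hv) y hy e2 with h1 | h1
        · exact Or.inl (reach_closed hv h1 e2)
        · exact Or.inr h1
      obtain ⟨w', E', hE', hs'⟩ := hK.exists_min
      have := hu w' E' hE' (fun v hv => (hUC v (reach_sub (hs' hv))).1)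
      obtain ⟨v, hv⟩ := hE'.ne
      exact (hUC v (reach_sub (hs' hv))).2 (this ▸ hv)
    · intro z hz hzs hzc
      have hzC := hz.1.resolve_left hzs
      have hzJ := hC.sub hzC
      have hzb : z ≠ b := fun hh => hC.hr (hh ▸ hzC)
      have h1 := h.dgJ hzJ hzb
      have hout : ∀ y ∈ S, Γ.Adj z y → y ∉ insert s C \ E → y ∈ P ∨ y ∈ D := by
        intro y hy e1 hn
        rcases (h.hS y).1 hy with h2 | h2 | h2
        · exact Or.inl h2
        · exact Or.inr h2
        exfalso
        apply hn
        refine ⟨?_, ?_⟩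
        · rcases hC.cl z hzC y h2 e1 with h1 | h1
          · exact Or.inr h1
          · exact Or.inl h1
        · intro hyE
          rcases hE.cl y hyE z hzJ e1.symm with h1 | h1
          · exact hz.2 h1
          · exact hzc h1
      have h2 : deg Γ S z ≤ deg Γ (insert s C \ E) z + 1 := deg_sub2 (fun y hy e hn y' hy' e' hn' =>
        h.J1 z hzJ hzb y (hout y hy e hn) e y' (hout y' hy' e' hn') e')
      omega
  have l2 := (h.tt _ _ _ hgood).1
  obtain ⟨y, hy, y', hy', hne, e1, l1⟩ := h.start hII hE
  have l0 := (h.Pcn a h.haP y' hy').one hne.symm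
  have l3 := hC.compl_root h.Jcn h.hbJ hC.hr
  have hCJ : ∀ q ∈ C, q ∈ J := fun q hq => hC.sub hq
  have hsJ := hC.hw
  have m1 := l1.symm.glue l2.symm (by
    rintro q (rfl | hq) hq'
    · rfl
    · exact absurd hq hq'.2)
  have m2 := m1.glue l3.symm (by
    rintro q ((rfl | hq) | hq) hq'
    · exact absurd hc1 hq'.2
    · exact absurd (hEC hq) hq'.2
    · exact hq.1.resolve_right hq'.2)
  have hTJ : (insert c1 E ∪ insert s C \ E) ∪ J \ C ⊆ J := by
    rintro q (((rfl | hq) | hq) | hq)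
    · exact hCJ _ hc1
    · exact hCJ _ (hEC hq)
    · rcases hq.1 with rfl | hh
      · exact hsJ
      · exact hCJ _ hh
    · exact hq.1
  have m3 := l0.edge e1 m2 (fun q hq hq' => h.PJ q hq (hTJ hq'))
  refine (m3.mono ?_).le (by rw [pow_succ]; omega)
  exact Set.union_subset h.PS (hTJ.trans h.JS)

theorem caseB2 (hC : Lobe Γ J b s C) (hE : MinLobe Γ J b c1 E) (hEC : E ⊆ C) (hc1 : c1 ∈ C)
    (hX : ∀ x ∈ X Γ D J, x = s ∨ x = c1) :
    LP Γ S a b (2 ^ (e + 1) - 1) := by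
  have hf := h.f4
  have hsC := hC.hwC
  have hsJ := hC.hw
  have hc1X : c1 ∈ X Γ D J := by
    obtain ⟨y, hy, hys⟩ := h.nbrD s
    exact (hX y hy).resolve_left hys ▸ hy
  have hc1J := hc1X.1
  obtain ⟨x1, hx1, e0⟩ := hc1X.2
  have hc1b : c1 ≠ b := fun hh => hC.hr (hh ▸ hc1)
  have hsD : s ∉ D := fun hh => h.DJ s hh hsJ
  have hdeg : ∀ z ∈ insert s D, z ≠ x1 → z ≠ s → e ≤ deg Γ (insert s D) z := by
    intro z hz hzx hzs
    have hzD := hz.resolve_left hzs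
    have h1 := h.dgD hzD
    have h2 : deg Γ S z ≤ deg Γ (insert s D) z + 1 := by
      apply deg_sub1 (t := c)
      intro y hy e2
      by_cases hyc : y = c
      · exact Or.inr hyc
      left
      by_cases hyD : y ∈ D
      · exact Or.inr hyD
      have hyJ := h.outD hzD hy e2 (by rintro (hh | hh) <;> contradiction)
      rcases hX y ⟨hyJ, z, hzD, e2⟩ with rfl | rfl
      · exact Or.inl rfl
      · exact absurd (h.Xuniq hc1J hc1b hzD hx1 e2 e0) hzx
    omega
  have hgood : Good Γ e (insert s D) x1 s := by
    refine ⟨Or.inr hx1, Or.inl rfl, fun hh => hsD (hh ▸ hx1), ?_, ?_, hdeg⟩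
    · have := h.he
      obtain ⟨y, hy, hyc, hyc1, e2⟩ := deg_three (show 3 ≤ deg Γ S x1 by have := h.dgD hx1; omega) c c1
      have hyD : y ∈ D := by
        by_contra hyD
        have hyJ := h.outD hx1 hy e2 (by rintro (hh | hh) <;> contradiction)
        exact hyc1 (h.D1 x1 hx1 y hyJ e2 c1 hc1J e0)
      have := hdeg y (Or.inr hyD) e2.ne.symm (fun hh => hsD (hh ▸ hyD))
      exact card_of_deg (Or.inr hyD) (h.he.trans this)
    · intro U hU hne hxU hsU t
      have hUD : ∀ q ∈ U, q ∈ D := fun q hq => (hU hq).resolve_left (fun hh => hsU (hh ▸ hq))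
      obtain ⟨x, hx, y, hy, hyU, hyc, hyt, e2⟩ := h.tc U (fun q hq => h.DS (hUD q hq)) hne (fun hh => h.aD (hUD _ hh))
        (fun hh => h.bD (hUD _ hh)) ⟨x1, h.DS hx1, hxU, fun hh => h.aD (hh ▸ hx1), fun hh => h.bD (hh ▸ hx1)⟩ c t
      refine ⟨x, hx, y, ?_, hyU, hyt, e2⟩
      by_cases hyD : y ∈ D
      · exact Or.inr hyD
      have hyJ := h.outD (hUD x hx) hy e2 (by rintro (hh | hh) <;> contradiction)
      rcases hX y ⟨hyJ, x, hUD x hx, e2⟩ with rfl | rfl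
      · exact Or.inl rfl
      · have := h.Xuniq hc1J hc1b (hUD x hx) hx1 e2 e0
        exact absurd (this ▸ hx) hxU
  have l2 := (h.tt _ _ _ hgood).1
  obtain ⟨y, hy, y', hy', hne, e1, l1⟩ := h.start hII hE
  have l0 := (h.Pcn a h.haP y' hy').one hne.symm
  have l3 := hC.compl_root h.Jcn h.hbJ hC.hr
  have hCJ : ∀ q ∈ C, q ∈ J := fun q hq => hC.sub hq
  have m1 := l2.glue l3.symm (by
    rintro q (rfl | hq) hq'
    · rfl
    · exact absurd hq'.1 (h.DJ q hq))
  have m2 := l1.symm.edge e0.symm m1 (by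
    rintro q hq hq'
    have hqC : q ∈ C := by
      rcases hq with rfl | hq
      · exact hc1
      · exact hEC hq
    rcases hq' with (rfl | hq') | hq'
    · exact hsC hqC
    · exact h.DJ q hq' (hCJ q hqC)
    · exact hq'.2 hqC)
  have hTJ : ∀ q, q ∈ insert c1 E ∪ (insert s D ∪ J \ C) → q ∈ D ∨ q ∈ J := by
    rintro q ((rfl | hq) | ((rfl | hq) | hq))
    · exact Or.inr (hCJ _ hc1)
    · exact Or.inr (hCJ _ (hEC hq))
    · exact Or.inr hsJ
    · exact Or.inl hq
    · exact Or.inr hq.1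
  have m3 := l0.edge e1 m2 (fun q hq hq' => (hTJ q hq').elim (h.PD q hq) (h.PJ q hq))
  refine (m3.mono ?_).le (by rw [pow_succ]; omega)
  exact Set.union_subset h.PS (fun q hq => (hTJ q hq).elim (fun h1 => h.DS h1) (fun h1 => h.JS h1))

theorem caseA' {c2 x1 x2 : Fin n → Bool} {C1 C2 E1 E2 : Set (Fin n → Bool)}
    (hmin : ∀ s' ∈ B Γ J b s, s' ≠ s → ∃ x ∈ X Γ D J, Conn Γ (J \ {s'}) x b)
    (hC1 : Lobe Γ J b s C1) (hx1 : x1 ∈ C1) (hx1X : x1 ∈ X Γ D J)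
    (hC2 : Lobe Γ J b s C2) (hx2 : x2 ∈ C2) (hx2X : x2 ∈ X Γ D J)
    (hE1 : MinLobe Γ J b c1 E1) (hE1C : E1 ⊆ C1)
    (hE2 : MinLobe Γ J b c2 E2) (hE2C : E2 ⊆ C2) (hne : E1 ≠ E2) :
    LP Γ S a b (2 ^ (e + 1) - 1) := by
  obtain ⟨y1, hy1, y1', hy1', _, e1⟩ := h.nbrEP hII hE1 a
  obtain ⟨y2, hy2, y2', hy2', hn, e2⟩ := h.nbrEP hII hE2 y1'
  obtain ⟨S1, S2, hS1, hS2, hd, ⟨t1, t2⟩ | ⟨t1, t2⟩⟩ := h.fanP hy1' hy2' hn.symm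
  · exact h.caseA hII hmin hC1 hx1 hx1X hE1 hE1C hE2 hne hy1 hy2 e1.symm e2.symm hS1 hS2 hd t1.symm t2
  · exact h.caseA hII hmin hC2 hx2 hx2X hE2 hE2C hE1 hne.symm hy2 hy1 e2.symm e1.symm hS2 hS1
      (fun x hx hx' => hd x hx' hx) t2.symm t1

theorem caseII : LP Γ S a b (2 ^ (e + 1) - 1) := by
  obtain ⟨s, hs, hXB, hmin⟩ := h.exists_s
  have mk : ∀ x ∈ X Γ D J, x ≠ s → Lobe Γ J b s (reach Γ (J \ {s}) x) ∧ x ∈ reach Γ (J \ {s}) x := by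
    intro x hx hxs
    exact ⟨Lobe.of_reach hs hx.1 hxs ((hXB hx).resolve_left hxs).2, reach_self ⟨hx.1, hxs⟩⟩
  obtain ⟨x0, hx0, hx0s⟩ := h.nbrD s
  obtain ⟨hC, hx0C⟩ := mk x0 hx0 hx0s
  obtain ⟨c1, E, hE, hEC⟩ := hC.exists_min
  have hc1 : c1 ∈ reach Γ (J \ {s}) x0 := Lobe.root_in h.Jcn h.hbJ hC hx0C hE.toLobe hEC (fun hh => hII _ _ hE _ hh hx0)
  by_contra hcon
  have key : ∀ C2 x2, Lobe Γ J b s C2 → x2 ∈ C2 → x2 ∈ X Γ D J → ∀ c2 E2, MinLobe Γ J b c2 E2 → E2 ⊆ C2 → E2 = E := by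
    intro C2 x2 hC2 hx2 hx2X c2 E2 hE2 hE2C
    by_contra hne
    exact hcon (h.caseA' hII hmin hC hx0C hx0 hC2 hx2 hx2X hE hEC hE2 hE2C (fun hh => hne hh.symm))
  have hXC : ∀ x ∈ X Γ D J, x ≠ s → x ∈ reach Γ (J \ {s}) x0 := by
    intro x hx hxs
    obtain ⟨hC2, hxC2⟩ := mk x hx hxs
    obtain ⟨c2, E2, hE2, hE2C⟩ := hC2.exists_min
    have := key _ x hC2 hxC2 hx c2 E2 hE2 hE2C
    obtain ⟨v, hv⟩ := hE2.ne
    exact hC2.sub_of_meet hC (hE2C hv) (hEC (this ▸ hv)) hxC2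
  by_cases hB : ∃ x ∈ X Γ D J, x ≠ s ∧ x ≠ c1
  · obtain ⟨x, hx, hxs, hxc⟩ := hB
    exact hcon (h.caseB1 hII hC hE hEC hc1 (fun w E' hE' hs' => key _ x0 hC hx0C hx0 w E' hE' hs')
      (hXC x hx hxs) (fun hh => hII _ _ hE _ hh hx) hxc)
  · push Not at hB
    refine hcon (h.caseB2 hII hC hE hEC hc1 ?_)
    intro x hx
    by_cases hxs : x = s
    · exact Or.inl hxs
    · exact Or.inr (hB x hx hxs)
end

theorem main (h : Cfg Γ e S a b P D J c) : LP Γ S a b (2 ^ (e + 1) - 2) ∧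
    (¬ (FullSub Γ S (e + 1) ∧ par a = par b) → LP Γ S a b (2 ^ (e + 1) - 1)) := by
  by_cases hII : II Γ D J b
  · have := h.caseII hII
    exact ⟨this.le (by omega), fun _ => this⟩
  · simp only [II, not_forall, not_not] at hII
    obtain ⟨w, E, hE, x', hx', _, x, hx, e1⟩ := hII
    exact h.caseI hE hx hx' e1
end Cfg
end HC

set_option linter.unusedVariables false
set_option linter.unusedSectionVars false
namespace HC
theorem Cn.union {V : Type*} {G : SimpleGraph V} {A B : Set V} {x y : V} (hA : Cn G A) (hB : Cn G B) (hx : x ∈ A) (hy : y ∈ B)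
    (e : G.Adj x y) : Cn G (A ∪ B) := by
  apply Cn.of_root x
  rintro z (hz | hz)
  · exact (hA z hz x hx).mono Set.subset_union_left
  · exact ((hB z hz y hy).mono Set.subset_union_right).snoc e.symm (Or.inl hx)

section
variable {n : ℕ} {Γ : SimpleGraph (Fin n → Bool)} {e : ℕ} {S : Set (Fin n → Bool)}
  {a b c w x x' y z : Fin n → Bool} 

theorem TC.symm (h : TC Γ S a b) : TC Γ S b a := by
  intro U h1 h2 h3 h4 ⟨z, hz, h5, h6, h7⟩ u v
  exact h U h1 h2 h4 h3 ⟨z, hz, h5, h7, h6⟩ u v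

theorem TC.nbr (h : TC Γ S a b) (hab : a ≠ b) (ha : a ∈ S) (hb : b ∈ S) (h4 : 4 ≤ S.ncard) (z : Fin n → Bool) (hz : z ∈ S) (hza : z ≠ a) (hzb : z ≠ b) :
    ∃ y ∈ S, Γ.Adj a y ∧ y ≠ b ∧ y ≠ z := by
  have hne : (S \ {a, b, z}).Nonempty := by
    by_contra hh
    rw [Set.not_nonempty_iff_eq_empty, Set.sdiff_eq_empty] at hh
    have := Set.ncard_le_ncard hh (Set.toFinite _)
    have h3 := Set.ncard_eq_three.2 ⟨a, b, z, hab, hza.symm, hzb.symm, rfl⟩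
    omega
  obtain ⟨x, hx, y, hy, hyU, hyb, hyz, e1⟩ := h (S \ {a, b, z}) (fun x hx => hx.1) hne (by simp) (by simp)
    ⟨z, hz, by simp, hza, hzb⟩ b z
  have : y = a := by
    by_contra hya
    apply hyU
    refine ⟨hy, ?_⟩
    rintro (hh | hh | hh)
    · exact hya hh
    · exact hyb hh
    · exact hyz hh
  subst this
  refine ⟨x, hx.1, e1.symm, ?_, ?_⟩
  · rintro rfl; exact hx.2 (by simp)
  · rintro rfl; exact hx.2 (by simp)

theorem TC.nbr2 (hΓ : Cub Γ) (h : TC Γ S a b) (hab : a ≠ b) (ha : a ∈ S) (hb : b ∈ S) (h4 : 4 ≤ S.ncard) (i : Fin n) :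
    ∃ y ∈ S, Γ.Adj a y ∧ y ≠ b ∧ y i = a i := by
  obtain ⟨z, hz, hza, hzb⟩ := exists_third (show 3 ≤ S.ncard by omega) a b
  obtain ⟨y1, hy1, e1, hb1, _⟩ := h.nbr hab ha hb h4 z hz hza hzb
  obtain ⟨y2, hy2, e2, hb2, hne⟩ := h.nbr hab ha hb h4 y1 hy1 e1.ne.symm hb1
  obtain ⟨j, rfl⟩ := hΓ _ _ e1
  obtain ⟨k, rfl⟩ := hΓ _ _ e2
  by_cases hj : i = j
  · refine ⟨_, hy2, e2, hb2, fl_ne ?_⟩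
    rintro rfl; exact hne (by rw [hj])
  · exact ⟨_, hy1, e1, hb1, fl_ne hj⟩

theorem conn_of_ch (h : Ch Γ S a b) (ha : a ∈ S) (hb : b ∈ S) (h3 : 3 ≤ S.ncard) : Cn Γ S := by
  apply Cn.of_root a
  have key : ∀ z ∈ S, Conn Γ S z a ∨ Conn Γ S z b := by
    intro z hz
    by_contra hh
    push Not at hh
    obtain ⟨x, hx, y, hy, hyU, _, e1⟩ := h (reach Γ S z) reach_sub ⟨z, reach_self hz⟩ hh.1 hh.2 a
    exact hyU (reach_closed hx hy e1)
  have hba : Conn Γ S b a := by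
    by_contra hba
    obtain ⟨z, hz, hza, hzb⟩ := exists_third h3 a b
    rcases key z hz with h1 | h1
    · obtain ⟨x, hx, y, hy, hyU, hya, e1⟩ := h (reach Γ S a \ {a}) (fun x hx => reach_sub hx.1) ⟨z, h1.symm, hza⟩ (by simp)
        (fun hh => hba (LP.symm hh.1)) a
      exact hyU ⟨reach_closed hx.1 hy e1, hya⟩
    · obtain ⟨x, hx, y, hy, hyU, hya, e1⟩ := h (reach Γ S b \ {b}) (fun x hx => reach_sub hx.1) ⟨z, h1.symm, hzb⟩
        (fun hh => hba hh.1) (by simp) b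
      exact hyU ⟨reach_closed hx.1 hy e1, hya⟩
  intro z hz
  rcases key z hz with h1 | h1
  · exact h1
  · exact h1.trans hba

theorem split_exists (hΓ : Cub Γ) (h : TC Γ S a b) (hab : a ≠ b) (ha : a ∈ S) (hb : b ∈ S) (h4 : 4 ≤ S.ncard)
    (hS : Cn Γ S) : ∃ J ⊆ S, b ∈ J ∧ a ∉ J ∧ Cn Γ J ∧ Cn Γ (J \ {b}) ∧ (J \ {b}).Nonempty ∧ Cn Γ (S \ J) ∧
      (∃ z ∈ S \ J, z ≠ a) ∧
      (∀ x ∈ S \ J, ∀ y ∈ J, Γ.Adj x y → ∀ y' ∈ J, Γ.Adj x y' → y = y') ∧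
      (∀ x ∈ J, x ≠ b → ∀ y ∈ S \ J, Γ.Adj x y → ∀ y' ∈ S \ J, Γ.Adj x y' → y = y') := by
  obtain ⟨i, hi⟩ := Function.ne_iff.1 hab
  obtain ⟨ya, hya, ea, hyab, hyai⟩ := h.nbr2 hΓ hab ha hb h4 i
  obtain ⟨yb, hyb, eb, hyba, hybi⟩ := h.symm.nbr2 hΓ hab.symm hb ha h4 i
  set H0 := reach Γ (S ∩ {x | x i = a i}) a with hH0
  have H0i : ∀ x ∈ H0, x ∈ S ∧ x i = a i := fun x hx => by
    have h1 : x ∈ S ∩ {x | x i = a i} := reach_sub hx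
    exact ⟨h1.1, h1.2⟩
  have haH0 : a ∈ H0 := reach_self ⟨ha, rfl⟩
  have hyaH0 : ya ∈ H0 := reach_closed haH0 ⟨hya, hyai⟩ ea
  have hbH0 : b ∉ H0 := fun hh => hi (H0i b hh).2.symm
  have hybH0 : yb ∉ H0 := fun hh => hi ((H0i yb hh).2.symm.trans hybi)
  set J0 := reach Γ (S \ H0) b with hJ0
  have hbJ0 : b ∈ J0 := reach_self ⟨hb, hbH0⟩
  have hybJ0 : yb ∈ J0 := reach_closed hbJ0 ⟨hyb, hybH0⟩ eb
  have J0S : ∀ x ∈ J0, x ∈ S ∧ x ∉ H0 := fun x hx => by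
    have h1 : x ∈ S \ H0 := reach_sub hx
    exact h1
  -- cross edges
  have cross : ∀ x ∈ S, x ∉ J0 → ∀ y ∈ J0, Γ.Adj x y → y = fl x i := by
    intro x hx hxJ y hy e1
    have hxH : x ∈ H0 := by
      by_contra hxH
      exact hxJ (reach_closed hy ⟨hx, hxH⟩ e1.symm)
    have hyi : y i ≠ a i := by
      intro hh
      exact (J0S y hy).2 (reach_closed hxH ⟨(J0S y hy).1, hh⟩ e1)
    obtain ⟨j, rfl⟩ := hΓ _ _ e1
    by_cases hj : i = j
    · rw [hj]
    · rw [fl_ne hj] at hyi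
      exact absurd (H0i x hxH).2 hyi
  have cross' : ∀ x ∈ S, x ∉ J0 → ∀ y ∈ J0, Γ.Adj x y → x = fl y i := by
    intro x hx hxJ y hy e1
    rw [cross x hx hxJ y hy e1, fl_fl]
  have hHcn : Cn Γ (S \ J0) := by
    apply Cn.of_root a
    intro z hz
    by_contra hc
    have := (hS z hz.1 a ha).closed (reach Γ (S \ J0) z ∪ {y | y ∈ J0 ∧ False}) (Or.inl (reach_self hz)) (by
      rintro x (hx | hx) hxS y hy e1
      · by_cases hyJ : y ∈ J0
        · exfalso
          have hxH : x ∈ H0 := by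
            by_contra hxH
            exact (reach_sub hx).2 (reach_closed hyJ ⟨hxS, hxH⟩ e1.symm)
          apply hc
          have h1 : Conn Γ H0 a x := reach_conn hxH
          exact LP.trans hx (h1.symm.mono (fun q hq => ⟨(H0i q hq).1, fun hh => (J0S q hh).2 hq⟩))
        · exact Or.inl (reach_closed hx ⟨hy, hyJ⟩ e1)
      · exact hx.2.elim)
    rcases this with h1 | h1
    · exact hc h1
    · exact h1.2
  set C1 := reach Γ (J0 \ {b}) yb with hC1
  have hybC1 : yb ∈ C1 := reach_self ⟨hybJ0, eb.ne.symm⟩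
  have C1J : ∀ x ∈ C1, x ∈ J0 ∧ x ≠ b := fun x hx => by
    have h1 : x ∈ J0 \ {b} := reach_sub hx
    exact h1
  have hJb : (insert b C1) \ {b} = C1 := by
    ext x; simp only [Set.mem_sdiff, Set.mem_insert_iff, Set.mem_singleton_iff]
    constructor
    · rintro ⟨h1 | h1, h2⟩
      · exact absurd h1 h2
      · exact h1
    · intro h1; exact ⟨Or.inr h1, (C1J x h1).2⟩
  have haJ0 : a ∉ J0 := fun hh => (J0S a hh).2 haH0
  have C1J0 : insert b C1 ⊆ J0 := Set.insert_subset hbJ0 (fun x hx => (C1J x hx).1)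
  refine ⟨insert b C1, fun x hx => (J0S x (C1J0 hx)).1, Or.inl rfl, fun hh => haJ0 (C1J0 hh), ?_, ?_, ?_, ?_, ?_, ?_, ?_⟩
  · apply Cn.of_root b
    rintro z (rfl | hz)
    · exact LP.refl (Or.inl rfl)
    · exact ((reach_Cn z hz yb hybC1).mono (Set.subset_insert _ _)).snoc eb.symm (Or.inl rfl)
  · rw [hJb]; exact reach_Cn
  · rw [hJb]; exact ⟨yb, hybC1⟩
  · apply Cn.of_root a
    have sub : S \ J0 ⊆ S \ insert b C1 := fun x hx => ⟨hx.1, fun hh => hx.2 (C1J0 hh)⟩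
    rintro z ⟨hz, hzJ⟩
    by_cases hzJ0 : z ∈ J0
    · have hzb : z ≠ b := fun hh => hzJ (Or.inl hh)
      have hzC : z ∉ C1 := fun hh => hzJ (Or.inr hh)
      have hKC : ∀ q ∈ reach Γ (J0 \ {b}) z, q ∉ C1 := fun q hq hq' => hzC (LP.trans hq' (LP.symm hq))
      obtain ⟨x, hx, y, hy, hyU, hyb', _, e1⟩ := h (reach Γ (J0 \ {b}) z) (fun q hq => (J0S q (reach_sub hq).1).1)
        ⟨z, reach_self ⟨hzJ0, hzb⟩⟩ (fun hh => haJ0 (reach_sub hh).1) (fun hh => (reach_sub hh).2 rfl)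
        ⟨yb, hyb, fun hh => hKC _ hh hybC1, hyba, eb.ne.symm⟩ b b
      have hyJ0 : y ∉ J0 := fun hh => hyU (reach_closed hx ⟨hh, hyb'⟩ e1)
      have h1 : Conn Γ (S \ insert b C1) z x := (reach_conn hx).mono (fun q hq => by
        refine ⟨(J0S q (reach_sub hq).1).1, ?_⟩
        rintro (hh | hh)
        · exact (reach_sub hq).2 hh
        · exact hKC q hq hh)
      exact (h1.snoc e1 (sub ⟨hy, hyJ0⟩)).trans ((hHcn y ⟨hy, hyJ0⟩ a ⟨ha, haJ0⟩).mono sub)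
    · exact (hHcn z ⟨hz, hzJ0⟩ a ⟨ha, haJ0⟩).mono sub
  · exact ⟨ya, ⟨hya, fun hh => (J0S ya (C1J0 hh)).2 hyaH0⟩, ea.ne.symm⟩
  · intro x hx y hy e1 y' hy' e2
    by_cases hxJ : x ∈ J0
    · have : ∀ y ∈ insert b C1, Γ.Adj x y → y = b := by
        rintro y (hy | hy) e1
        · exact hy
        · exact absurd (Or.inr (reach_closed hy ⟨hxJ, fun hh => hx.2 (Or.inl hh)⟩ e1.symm)) hx.2
      rw [this y hy e1, this y' hy' e2]
    · rw [cross x hx.1 hxJ y (C1J0 hy) e1, cross x hx.1 hxJ y' (C1J0 hy') e2]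
  · intro x hx hxb
    have hxC : x ∈ C1 := hx.resolve_left hxb
    have key : ∀ y ∈ S \ insert b C1, Γ.Adj x y → y = fl x i := by
      intro y hy e1
      refine cross' y hy.1 ?_ x (C1J0 hx) e1.symm
      intro hyJ
      exact hy.2 (Or.inr (reach_closed hxC ⟨hyJ, fun hh => hy.2 (Or.inl hh)⟩ e1))
    intro y hy e1 y' hy' e2
    rw [key y hy e1, key y' hy' e2]

theorem cfg_exists (hΓ : Cub Γ) (he : 2 ≤ e) (tt : TT Γ e) (h : TC Γ S a b) (hab : a ≠ b) (ha : a ∈ S) (hb : b ∈ S)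
    (h4 : 4 ≤ S.ncard) (hScn : Cn Γ S) (dg : ∀ z ∈ S, z ≠ a → z ≠ b → e + 1 ≤ deg Γ S z) :
    ∃ P D J c, Cfg Γ e S a b P D J c := by
  obtain ⟨J, hJS, hbJ, haJ, hJ, hJb, hJne, hH, ⟨z0, hz0, hz0a⟩, hHJ, hJH⟩ := split_exists hΓ h hab ha hb h4 hScn
  have haH : a ∈ S \ J := ⟨ha, haJ⟩
  obtain ⟨c, D, hD, _⟩ := (Lobe.of_reach (G := Γ) (r := a) haH hz0 hz0a (fun hc => hc.right.2 rfl)).exists_min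
  have hJ0 : (S \ ((S \ J) \ D)) \ D = J := by
    ext x; constructor
    · rintro ⟨⟨h1, h2⟩, h3⟩
      by_contra hx
      exact h2 ⟨⟨h1, hx⟩, h3⟩
    · intro hx
      exact ⟨⟨hJS hx, fun hh => hh.1.2 hx⟩, fun hh => (hD.sub hh).2 hx⟩
  obtain ⟨P, ⟨haP, hcP, hPH, hPcn, hJcn, hJbcn, hu⟩, hmin⟩ := Set.exists_min_image
    {P : Set (Fin n → Bool) | a ∈ P ∧ c ∈ P ∧ P ⊆ (S \ J) \ D ∧ Cn Γ P ∧ Cn Γ ((S \ P) \ D) ∧ Cn Γ (((S \ P) \ D) \ {b}) ∧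
      ∀ x ∈ (S \ P) \ D, x ≠ b → ∀ y, (y ∈ P ∨ y ∈ D) → Γ.Adj x y → ∀ y', (y' ∈ P ∨ y' ∈ D) → Γ.Adj x y' → y = y'}
    (fun P => P.ncard) (Set.toFinite _) ⟨(S \ J) \ D, ⟨haH, hD.hr⟩, ⟨hD.hw, hD.hwC⟩, subset_rfl, hD.compl hH,
      by rw [hJ0]; exact hJ, by rw [hJ0]; exact hJb, by
        rw [hJ0]
        have : ∀ y, (y ∈ (S \ J) \ D ∨ y ∈ D) → y ∈ S \ J := by
          rintro y (hy | hy)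
          · exact hy.1
          · exact hD.sub hy
        intro x hx hxb y hy e1 y' hy' e2
        exact hJH x hx hxb y (this y hy) e1 y' (this y' hy') e2⟩
  have hbP : b ∉ P := fun hh => (hPH hh).1.2 hbJ
  have hbD : b ∉ D := fun hh => (hD.sub hh).2 hbJ
  have JJ : J ⊆ (S \ P) \ D := fun x hx => ⟨⟨hJS hx, fun hh => (hPH hh).1.2 hx⟩, fun hh => (hD.sub hh).2 hx⟩
  have DJ' : ∀ x ∈ D, ∀ y ∈ (S \ P) \ D, Γ.Adj x y → y ∈ J := by
    intro x hx y hy e1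
    by_contra hyJ
    rcases hD.cl x hx y ⟨hy.1.1, hyJ⟩ e1 with h1 | h1
    · exact hy.2 h1
    · exact hy.1.2 (h1 ▸ hcP)
  have DPc : ∀ x ∈ D, ∀ y ∈ P, Γ.Adj x y → y = c := by
    intro x hx y hy e1
    exact (hD.cl x hx y (hPH hy).1 e1).resolve_left (hPH hy).2
  have hch : Ch Γ P a c := by
    intro U hU hne haU hcU t
    by_contra hno
    push Not at hno
    obtain ⟨z, hz⟩ := hne
    obtain ⟨p, hp, hpP, q, hq, hqU, e1⟩ := (hPcn z (hU hz) a haP).cross U hz haU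
    have hqt : q = t := by
      by_contra hh; exact hno p hp q hq hqU hh e1
    subst hqt
    set K := reach Γ U z with hKd
    have KU : ∀ x ∈ K, x ∈ U := fun x hx => reach_sub hx
    have hK : Lobe Γ P a q K := by
      refine ⟨hq, ⟨z, reach_self hz⟩, fun v hv => hU (KU v hv), fun hh => hqU (KU _ hh),
          fun hh => haU (KU _ hh), reach_Cn, ?_⟩
      intro v hv y hy e2
      by_contra hh
      push Not at hh
      refine hno v (KU v hv) y hy (fun h' => hh.1 (reach_closed hv h' e2)) hh.2 e2
    have hKP : ∀ x ∈ K, x ∈ P := fun x hx => hK.sub hx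
    obtain ⟨d0, hd0⟩ := hD.ne
    have KD : ∀ x ∈ K, ∀ y ∈ D, ¬ Γ.Adj x y := by
      intro x hx y hy e2
      exact hcU (KU c (DPc y hy x (hKP x hx) e2.symm ▸ hx))
    obtain ⟨x, hx, y, hy, hyK, hyq, hyb, e2⟩ := h K (fun x hx => (hPH (hKP x hx)).1.1) hK.ne hK.hr
      (fun hh => hbP (hKP _ hh)) ⟨d0, (hD.sub hd0).1, fun hh => (hPH (hKP _ hh)).2 hd0,
        fun hh => hD.hr (hh ▸ hd0), fun hh => hbD (hh ▸ hd0)⟩ q b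
    have hyJ : y ∈ (S \ P) \ D := by
      refine ⟨⟨hy, fun hh => ?_⟩, fun hh => KD x hx y hh e2⟩
      rcases hK.cl x hx y hh e2 with h1 | h1
      · exact hyK h1
      · exact hyq h1
    have eq1 : (S \ (P \ K)) \ D = ((S \ P) \ D) ∪ K := by
      ext v; constructor
      · rintro ⟨⟨h1, h2⟩, h3⟩
        by_cases hv : v ∈ K
        · exact Or.inr hv
        · exact Or.inl ⟨⟨h1, fun hh => h2 ⟨hh, hv⟩⟩, h3⟩
      · rintro (⟨⟨h1, h2⟩, h3⟩ | h1)
        · exact ⟨⟨h1, fun hh => h2 hh.1⟩, h3⟩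
        · exact ⟨⟨(hPH (hKP v h1)).1.1, fun hh => hh.2 h1⟩, (hPH (hKP v h1)).2⟩
    have eq2 : (((S \ P) \ D) ∪ K) \ {b} = (((S \ P) \ D) \ {b}) ∪ K := by
      ext v; constructor
      · rintro ⟨h1 | h1, h2⟩
        · exact Or.inl ⟨h1, h2⟩
        · exact Or.inr h1
      · rintro (⟨h1, h2⟩ | h1)
        · exact ⟨Or.inl h1, h2⟩
        · exact ⟨Or.inr h1, fun hh => hbP (hh ▸ hKP v h1)⟩
    have := hmin (P \ K) ⟨⟨haP, hK.hr⟩, ⟨hcP, fun hh => hcU (KU _ hh)⟩, fun v hv => hPH hv.1, hK.compl hPcn, by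
        rw [eq1]; exact Cn.union hJcn hK.cn hyJ hx e2.symm, by
        rw [eq1, eq2]; exact Cn.union hJbcn hK.cn ⟨hyJ, hyb⟩ hx e2.symm, by
        rw [eq1]
        rintro v (hv | hv) hvb r hr e3 r' hr' e4
        · exact hu v hv hvb r (hr.imp (fun h => h.1) id) e3 r' (hr'.imp (fun h => h.1) id) e4
        · have key : ∀ r, (r ∈ P \ K ∨ r ∈ D) → Γ.Adj v r → r = q := by
            rintro r (hr | hr) e3
            · exact (hK.cl v hv r hr.1 e3).resolve_left hr.2
            · exact absurd e3 (KD v hv r hr)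
          rw [key r hr e3, key r' hr' e4]⟩
    have h2 : (P \ K).ncard < P.ncard := Set.ncard_lt_ncard ⟨Set.sdiff_subset, fun hh => (hh (hKP z (reach_self hz))).2 (reach_self hz)⟩ (Set.toFinite _)
    have h3 : P.ncard ≤ (P \ K).ncard := this
    omega
  refine ⟨P, D, (S \ P) \ D, c, ?_⟩
  refine ⟨hΓ, he, tt, h, dg, ?_, fun x hx => (hPH hx).2, fun x hx hh => hh.1.2 hx, fun x hx hh => hh.2 hx, haP, hcP,
    ⟨⟨hb, hbP⟩, hbD⟩, hPcn, hch, hD.ne, hD.cn, fun z hz t hzt htc => hD.conn hH haH hz hzt htc, DPc, ?_, hJcn, hJbcn, ?_, hu⟩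
  · intro x
    constructor
    · intro hx
      by_cases h1 : x ∈ P
      · exact Or.inl h1
      by_cases h2 : x ∈ D
      · exact Or.inr (Or.inl h2)
      exact Or.inr (Or.inr ⟨⟨hx, h1⟩, h2⟩)
    · rintro (h1 | h1 | h1)
      · exact (hPH h1).1.1
      · exact (hD.sub h1).1
      · exact h1.1.1
  · intro x hx y hy e1 y' hy' e2
    exact hHJ x (hD.sub hx) y (DJ' x hx y hy e1) e1 y' (DJ' x hx y' hy' e2) e2
  · obtain ⟨j, hj⟩ := hJne
    exact ⟨j, JJ hj.1, hj.2⟩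
end
end HC

set_option linter.unusedVariables false
set_option linter.unusedSectionVars false
namespace HC
section
variable {n : ℕ} {Γ : SimpleGraph (Fin n → Bool)} {e d k : ℕ} {S S' S1 S2 U : Set (Fin n → Bool)}
  {a b c u v w x x' y z : Fin n → Bool} 

theorem route (l : LP Γ S' u v k) (hS' : ∀ x ∈ S', x ∈ U ∨ x = u ∨ x = v) (hS'S : S' ⊆ S) (g1 : Conn Γ S1 a u) (g2 : Conn Γ S2 b v)
    (h1 : S1 ⊆ S \ U) (h2 : S2 ⊆ S \ U) (hd : ∀ x ∈ S1, x ∉ S2) (hne : ¬ (a = u ∧ b = v)) : LP Γ S a b (k + 1) := by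
  have key : ∀ k1 k2, LP Γ S1 a u k1 → LP Γ S2 b v k2 → LP Γ S a b (k1 + k + k2) := by
    intro k1 k2 g1 g2
    have m1 := g1.glue l (by
      intro x hx hx'
      rcases hS' x hx' with h | h | h
      · exact absurd h (h1 hx).2
      · exact h
      · exact absurd g2.right (h ▸ hd x hx))
    have m2 := m1.glue g2.symm (by
      rintro x (hx | hx) hx'
      · exact absurd hx' (hd x hx)
      · rcases hS' x hx with h | h | h
        · exact absurd h (h2 hx').2
        · exact absurd hx' (h ▸ hd _ g1.right)
        · exact h)
    refine m2.mono (Set.union_subset (Set.union_subset (fun x hx => (h1 hx).1) hS'S) (fun x hx => (h2 hx).1))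
  by_cases hau : a = u
  · have hbv : b ≠ v := fun hh => hne ⟨hau, hh⟩
    exact (key 0 1 g1 (g2.one hbv)).le (by omega)
  · exact (key 1 0 (g1.one hau) g2).le (by omega)

theorem ch_sub (h : Ch Γ S a b) (hS : ∀ x ∈ S', x ≠ u → x ≠ v → x ∈ S ∧ x ≠ a ∧ x ≠ b ∧ ∀ y ∈ S, Γ.Adj x y → y ∈ S') : Ch Γ S' u v := by
  intro W hW hne hu hv t
  have key : ∀ x ∈ W, x ∈ S ∧ x ≠ a ∧ x ≠ b ∧ ∀ y ∈ S, Γ.Adj x y → y ∈ S' := fun x hx =>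
    hS x (hW hx) (fun hh => hu (hh ▸ hx)) (fun hh => hv (hh ▸ hx))
  obtain ⟨x, hx, y, hy, hyW, hyt, e1⟩ := h W (fun x hx => (key x hx).1) hne (fun hh => (key _ hh).2.1 rfl)
    (fun hh => (key _ hh).2.2.1 rfl) t
  exact ⟨x, hx, y, (key x hx).2.2.2 y hy e1, hyW, hyt, e1⟩

theorem good_sub (h : Good Γ d S a b) (hS : ∀ x ∈ S', x ≠ u → x ≠ v → x ∈ S ∧ x ≠ a ∧ x ≠ b ∧ ∀ y ∈ S, Γ.Adj x y → y ∈ S')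
    (hu : u ∈ S') (hv : v ∈ S') (huv : u ≠ v) (hz : z ∈ S') (hzu : z ≠ u) (hzv : z ≠ v) : Good Γ d S' u v := by
  refine ⟨hu, hv, huv, ?_, ch_sub h.ch hS, ?_⟩
  · have : ({u, v, z} : Set (Fin n → Bool)) ⊆ S' := by
      rintro q (rfl | rfl | rfl) <;> assumption
    have h3 := Set.ncard_le_ncard this (Set.toFinite _)
    rw [Set.ncard_eq_three.2 ⟨u, v, z, huv, hzu.symm, hzv.symm, rfl⟩] at h3
    exact h3
  · intro x hx hxu hxv
    obtain ⟨h1, h2, h3, h4⟩ := hS x hx hxu hxv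
    exact (h.dg x h1 h2 h3).trans (deg_sub h4)

theorem full_two (hS' : FullSub Γ S' d) (hS1 : FullSub Γ S1 d) (hp : par a = par b) (hab : a ≠ b)
    (ha : a ∈ S') (hb : b ∈ S') (ha1 : a ∈ S1) (hb1 : b ∈ S1) : ∃ z ∈ S', z ∈ S1 ∧ z ≠ a ∧ z ≠ b := by
  obtain ⟨i, hi⟩ := Function.ne_iff.1 hab
  have key : ∀ T, FullSub Γ T d → a ∈ T → b ∈ T → fl a i ∈ T := by
    rintro T ⟨I, u, hI, hT, hadj⟩ h1 h2
    rw [hT] at h1 h2 ⊢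
    intro j hj
    rw [fl_ne, h1 j hj]
    rintro rfl
    exact hi ((h1 j hj).trans (h2 j hj).symm)
  refine ⟨fl a i, key _ hS' ha hb, key _ hS1 ha1 hb1, fl_ne_self, ?_⟩
  rintro rfl
  rw [par_fl] at hp; simp at hp

theorem TT_step (hΓ : Cub Γ) (he : 2 ≤ e) (tt : TT Γ e) : TT Γ (e + 1) := by
  have main : ∀ N, ∀ S a b, S.ncard ≤ N → Good Γ (e + 1) S a b → LP Γ S a b (2 ^ (e + 1) - 2) ∧
      (¬ (FullSub Γ S (e + 1) ∧ par a = par b) → LP Γ S a b (2 ^ (e + 1) - 1)) := by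
    intro N
    induction N with
    | zero =>
      intro S a b hN hg
      have := hg.card; omega
    | succ N ih =>
      intro S a b hN hg
      have ih' : ∀ S' a' b', S' ⊆ S → (∃ z ∈ S, z ∉ S') → Good Γ (e + 1) S' a' b' → LP Γ S' a' b' (2 ^ (e + 1) - 2) ∧
          (¬ (FullSub Γ S' (e + 1) ∧ par a' = par b') → LP Γ S' a' b' (2 ^ (e + 1) - 1)) := by
        rintro S' a' b' hsub ⟨z, hz, hz'⟩ hg'
        apply ih _ _ _ _ hg'
        have := Set.ncard_lt_ncard ⟨hsub, fun hh => hz' (hh hz)⟩ (Set.toFinite S)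
        omega
      have hpow : 4 ≤ 2 ^ (e + 1) := le_trans (by norm_num) (Nat.pow_le_pow_right (by norm_num) (by omega) : 2 ^ 2 ≤ 2 ^ (e + 1))
      by_cases htc : TC Γ S a b
      · have h4 : 4 ≤ S.ncard := by
          obtain ⟨z, hz, hza, hzb⟩ := exists_third hg.card a b
          have h1 := hg.dg z hz hza hzb
          have h2 : deg Γ S z ≤ (S \ {z}).ncard := Set.ncard_le_ncard (fun y hy => ⟨hy.1, fun hh => (hy.2 : Γ.Adj z y).ne hh.symm⟩) (Set.toFinite _)
          have h3 := Set.ncard_sdiff_singleton_add_one hz (Set.toFinite _)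
          omega
        obtain ⟨P, D, J, c, h⟩ := cfg_exists hΓ he tt htc hg.ne hg.ha hg.hb h4 (conn_of_ch hg.ch hg.ha hg.hb hg.card) hg.dg
        exact h.main
      · simp only [TC, not_forall] at htc
        obtain ⟨U, hU, hne, haU, hbU, ⟨z0, hz0, hz0U, hz0a, hz0b⟩, u, v, hno⟩ := htc
        push Not at hno
        have hout : ∀ x ∈ U, ∀ y ∈ S, Γ.Adj x y → y ∈ U ∨ y = u ∨ y = v := by
          intro x hx y hy e1
          by_contra hh
          push Not at hh
          exact hno x hx y hy hh.1 hh.2.1 hh.2.2 e1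
        have hv : v ∈ S ∧ v ∉ U ∧ v ≠ u := by
          obtain ⟨x, hx, y, hy, hyU, hyu, e1⟩ := hg.ch U hU hne haU hbU u
          have : y = v := ((hout x hx y hy e1).resolve_left hyU).resolve_left hyu
          subst this; exact ⟨hy, hyU, hyu⟩
        have hu : u ∈ S ∧ u ∉ U := by
          obtain ⟨x, hx, y, hy, hyU, hyu, e1⟩ := hg.ch U hU hne haU hbU v
          have : y = u := ((hout x hx y hy e1).resolve_left hyU).resolve_right hyu
          subst this; exact ⟨hy, hyU⟩
        obtain ⟨z1, hz1⟩ := hne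
        have hS'S : insert u (insert v U) ⊆ S := Set.insert_subset hu.1 (Set.insert_subset hv.1 hU)
        have hg' : Good Γ (e + 1) (insert u (insert v U)) u v := by
          apply good_sub hg (z := z1)
          · rintro x (hx | hx | hx) hxu hxv
            · exact absurd hx hxu
            · exact absurd hx hxv
            refine ⟨hU hx, fun hh => haU (hh ▸ hx), fun hh => hbU (hh ▸ hx), ?_⟩
            intro y hy e1
            rcases hout x hx y hy e1 with h | h | h
            · exact Or.inr (Or.inr h)
            · exact Or.inl h
            · exact Or.inr (Or.inl h)
          · exact Or.inl rfl
          · exact Or.inr (Or.inl rfl)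
          · exact hv.2.2.symm
          · exact Or.inr (Or.inr hz1)
          · exact fun hh => hu.2 (hh ▸ hz1)
          · exact fun hh => hv.2.1 (hh ▸ hz1)
        have memS' : ∀ x ∈ insert u (insert v U), x ∈ U ∨ x = u ∨ x = v := by
          rintro x (hx | hx | hx)
          · exact Or.inr (Or.inl hx)
          · exact Or.inr (Or.inr hx)
          · exact Or.inl hx
        by_cases hsame : (a = u ∧ b = v) ∨ (a = v ∧ b = u)
        · have hout2 : ∀ x ∈ U, ∀ y ∈ S, Γ.Adj x y → y ∈ U ∨ y = a ∨ y = b := by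
            intro x hx y hy e1
            rcases hsame with ⟨rfl, rfl⟩ | ⟨rfl, rfl⟩
            · exact hout x hx y hy e1
            · exact (hout x hx y hy e1).imp id Or.symm
          have hz0' : z0 ∉ insert u (insert v U) := by
            intro hh
            rcases hsame with ⟨rfl, rfl⟩ | ⟨rfl, rfl⟩ <;> rcases memS' _ hh with h | h | h <;> contradiction
          have r1 : LP Γ (insert u (insert v U)) a b (2 ^ (e + 1) - 2) ∧
              (¬ (FullSub Γ (insert u (insert v U)) (e + 1) ∧ par a = par b) → LP Γ (insert u (insert v U)) a b (2 ^ (e + 1) - 1)) := by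
            rcases hsame with ⟨rfl, rfl⟩ | ⟨rfl, rfl⟩
            · exact ih' _ _ _ hS'S ⟨z0, hz0, hz0'⟩ hg'
            · exact ih' _ _ _ hS'S ⟨z0, hz0, hz0'⟩ hg'.symm
          have hg2 : Good Γ (e + 1) (S \ U) a b := by
            apply good_sub hg (z := z0)
            · rintro x hx hxa hxb
              refine ⟨hx.1, hxa, hxb, ?_⟩
              intro y hy e1
              refine ⟨hy, fun hyU => ?_⟩
              rcases hout2 y hyU x hx.1 e1.symm with h | h | h
              · exact hx.2 h
              · exact hxa h
              · exact hxb h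
            · exact ⟨hg.ha, haU⟩
            · exact ⟨hg.hb, hbU⟩
            · exact hg.ne
            · exact ⟨hz0, hz0U⟩
            · exact hz0a
            · exact hz0b
          have r2 := ih' _ _ _ Set.sdiff_subset ⟨z1, hU hz1, fun hh => hh.2 hz1⟩ hg2
          refine ⟨r1.1.mono hS'S, fun _ => ?_⟩
          by_cases q1 : FullSub Γ (insert u (insert v U)) (e + 1) ∧ par a = par b
          · by_cases q2 : FullSub Γ (S \ U) (e + 1) ∧ par a = par b
            · obtain ⟨z, hz, hz', hza, hzb⟩ := full_two q1.1 q2.1 q1.2 hg.ne r1.1.left r1.1.right r2.1.left r2.1.right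
              exfalso
              rcases hsame with ⟨rfl, rfl⟩ | ⟨rfl, rfl⟩ <;> rcases memS' _ hz with h | h | h
              · exact hz'.2 h
              · exact hza h
              · exact hzb h
              · exact hz'.2 h
              · exact hzb h
              · exact hza h
            · exact (r2.2 q2).mono Set.sdiff_subset
          · exact (r1.2 q1).mono hS'S
        · have hprop : ∃ z ∈ S, z ∉ insert u (insert v U) := by
            by_contra hh
            push Not at hh
            have h1 := (memS' a (hh a hg.ha)).resolve_left haU
            have h2 := (memS' b (hh b hg.hb)).resolve_left hbU
            have := hg.ne
            rcases h1 with rfl | rfl <;> rcases h2 with rfl | rfl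
            · exact this rfl
            · exact hsame (Or.inl ⟨rfl, rfl⟩)
            · exact hsame (Or.inr ⟨rfl, rfl⟩)
            · exact this rfl
          have r1 := (ih' _ _ _ hS'S hprop hg').1
          have men := menger (G := Γ) (S := S \ U) (p := a) (q := b) (r := u) (t := v) ⟨hg.ha, haU⟩ ⟨hg.hb, hbU⟩ (by
            intro s
            by_contra hcon
            push Not at hcon
            let W : Set (Fin n → Bool) := {z | Conn Γ ((S \ U) \ {s}) u z ∨ Conn Γ ((S \ U) \ {s}) v z}
            have hWs : ∀ z ∈ W, z ∈ (S \ U) \ {s} := by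
              rintro z (hz | hz)
              · exact hz.right
              · exact hz.right
            obtain ⟨x, hx, y, hy, hyU, hys, e1⟩ := hg.ch (W ∪ U) (Set.union_subset (fun z hz => (hWs z hz).1.1) hU) ⟨z1, Or.inr hz1⟩
              (by
                rintro ((hh | hh) | hh)
                · exact hcon a (Or.inl rfl) u (Or.inl rfl) hh.symm
                · exact hcon a (Or.inl rfl) v (Or.inr rfl) hh.symm
                · exact haU hh)
              (by
                rintro ((hh | hh) | hh)
                · exact hcon b (Or.inr rfl) u (Or.inl rfl) hh.symm
                · exact hcon b (Or.inr rfl) v (Or.inr rfl) hh.symm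
                · exact hbU hh) s
            have hyUU : y ∉ U := fun hh => hyU (Or.inr hh)
            apply hyU
            left
            rcases hx with (hx | hx) | hx
            · exact Or.inl (hx.snoc e1 ⟨⟨hy, hyUU⟩, hys⟩)
            · exact Or.inr (hx.snoc e1 ⟨⟨hy, hyUU⟩, hys⟩)
            · rcases (hout x hx y hy e1).resolve_left hyUU with rfl | rfl
              · exact Or.inl (LP.refl ⟨⟨hy, hyUU⟩, hys⟩)
              · exact Or.inr (LP.refl ⟨⟨hy, hyUU⟩, hys⟩))
          have fin : LP Γ S a b (2 ^ (e + 1) - 2 + 1) := by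
            obtain ⟨S1, S2, hS1, hS2, hd, ⟨g1, g2⟩ | ⟨g1, g2⟩⟩ := men
            · exact route r1 memS' hS'S g1 g2 hS1 hS2 hd (fun hh => hsame (Or.inl hh))
            · exact route r1.symm (fun x hx => (memS' x hx).imp id Or.symm) hS'S g1 g2 hS1 hS2 hd (fun hh => hsame (Or.inr hh))
          exact ⟨fin.le (by omega), fun _ => fin.le (by omega)⟩
  intro S a b hg
  have := main _ S a b le_rfl hg
  exact ⟨this.1, fun h _ => this.2 h⟩

theorem TT_all (hΓ : Cub Γ) (d : ℕ) (hd : 2 ≤ d) : TT Γ d := by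
  induction d, hd using Nat.le_induction with
  | base => exact TT_two hΓ
  | succ e he ih => exact TT_step hΓ he ih
end
end HC

set_option linter.unusedVariables false
set_option linter.unusedSectionVars false
namespace HC
section
variable {n d : ℕ} {G : (hypercube n).Subgraph} {S : Set (Fin n → Bool)} {a b : Fin n → Bool} {k : ℕ}

theorem cub_coe : Cub G.spanningCoe := fun x y h => hyp_adj.1 (G.adj_sub h)

theorem P.toWalk (h : P G.spanningCoe S a b k) (hS : S ⊆ G.verts) (ha : a ∈ G.verts) (hb : b ∈ G.verts) :
    ∃ p : G.coe.Walk ⟨a, ha⟩ ⟨b, hb⟩, p.IsPath ∧ p.length = k ∧ ∀ x ∈ p.support, x.1 ∈ S := by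
  induction h with
  | nil h => exact ⟨.nil, by simp, rfl, by simpa using h⟩
  | @cons S a b c k h e p ih =>
    have hbV : b ∈ G.verts := hS p.left.1
    obtain ⟨q, hq, hl, hs⟩ := ih (fun x hx => hS hx.1) hbV hb
    have e' : G.coe.Adj ⟨a, ha⟩ ⟨b, hbV⟩ := e
    refine ⟨.cons e' q, ?_, by simp [hl], ?_⟩
    · rw [SimpleGraph.Walk.cons_isPath_iff]
      exact ⟨hq, fun hh => (hs _ hh).2 rfl⟩
    · intro x hx
      rw [SimpleGraph.Walk.support_cons, List.mem_cons] at hx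
      rcases hx with rfl | hx
      · exact h
      · exact (hs x hx).1

theorem LP.toWalk (h : LP G.spanningCoe G.verts a b k) (ha : a ∈ G.verts) (hb : b ∈ G.verts) :
    ∃ p : G.coe.Walk ⟨a, ha⟩ ⟨b, hb⟩, p.IsPath ∧ k ≤ p.length := by
  obtain ⟨m, hm, h⟩ := h
  obtain ⟨p, hp, hl, _⟩ := h.toWalk subset_rfl ha hb
  exact ⟨p, hp, by omega⟩

theorem del_cross (h2 : TwoConnected G.coe) {v z w : Fin n → Bool} (hv : v ∈ G.verts) (hz : z ∈ G.verts) (hw : w ∈ G.verts)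
    (hzv : z ≠ v) (hwv : w ≠ v) (A : Set (Fin n → Bool)) (hzA : z ∈ A) (hwA : w ∉ A) :
    ∃ x ∈ A, ∃ y ∈ G.verts, y ∉ A ∧ x ≠ v ∧ y ≠ v ∧ G.spanningCoe.Adj x y := by
  have hc := h2.2 ⟨v, hv⟩
  set K := (⊤ : G.coe.Subgraph).deleteVerts {⟨v, hv⟩} with hK
  have mem : ∀ q : Fin n → Bool, ∀ hq : q ∈ G.verts, q ≠ v → (⟨q, hq⟩ : G.verts) ∈ K.verts := by
    intro q hq hqv
    simp [hK, hqv]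
  obtain ⟨p⟩ := hc.preconnected ⟨⟨z, hz⟩, mem z hz hzv⟩ ⟨⟨w, hw⟩, mem w hw hwv⟩
  obtain ⟨dd, _, h1, h3⟩ := p.exists_boundary_dart {x | x.1.1 ∈ A} hzA hwA
  have hadj : K.Adj dd.fst.1 dd.snd.1 := dd.adj
  have e1 : G.coe.Adj dd.fst.1 dd.snd.1 := hadj.adj_sub
  have nv : ∀ q : K.verts, q.1.1 ≠ v := by
    intro q hh
    have := q.2
    simp only [hK, SimpleGraph.Subgraph.deleteVerts_verts] at this
    exact this.2 (Subtype.ext hh)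
  exact ⟨dd.fst.1.1, h1, dd.snd.1.1, dd.snd.1.2, h3, nv _, nv _, e1⟩

theorem ch_of (h2 : TwoConnected G.coe) (ha : a ∈ G.verts) (hb : b ∈ G.verts) (hab : a ≠ b) : Ch G.spanningCoe G.verts a b := by
  intro U hU hne haU hbU t
  by_cases hcase : t ∈ G.verts ∧ ∃ z ∈ U, z ≠ t
  · obtain ⟨ht, z, hz, hzt⟩ := hcase
    obtain ⟨w, hw, hwt, hwU⟩ : ∃ w ∈ G.verts, w ≠ t ∧ w ∉ U := by
      by_cases h : a = t
      · exact ⟨b, hb, fun hh => hab (h.trans hh.symm), hbU⟩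
      · exact ⟨a, ha, h, haU⟩
    obtain ⟨x, hx, y, hy, hyU, _, hyt, e1⟩ := del_cross h2 ht (hU hz) hw hzt hwt U hz hwU
    exact ⟨x, hx, y, hy, hyU, hyt, e1⟩
  · obtain ⟨z, hz⟩ := hne
    obtain ⟨x, hx, y, hy, hyU, _, hyt, e1⟩ := del_cross h2 ha (hU hz) hb (fun hh => haU (hh ▸ hz)) hab.symm U hz hbU
    refine ⟨x, hx, y, hy, hyU, ?_, e1⟩
    rintro rfl
    apply hcase
    exact ⟨hy, z, hz, fun hh => hyU (hh ▸ hz)⟩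

theorem even_iff (x y : Fin n → Bool) : Even (hammingDist x y) ↔ par x = par y := by
  have h : ∑ i, (x i).toNat + ∑ i, (y i).toNat = hammingDist x y + 2 * ∑ i, (x i && y i).toNat := by
    rw [hammingDist, Finset.card_filter, Finset.mul_sum, ← Finset.sum_add_distrib, ← Finset.sum_add_distrib]
    apply Finset.sum_congr rfl
    intro i _
    cases x i <;> cases y i <;> simp
  unfold par
  rw [Nat.even_iff, decide_eq_decide]
  omega

theorem iso_of_full (ha : a ∈ G.verts) (hb : b ∈ G.verts) (hF : FullSub G.spanningCoe G.verts d) (hp : par a = par b) :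
    ∃ e : G.coe ≃g hypercube d, Even (hammingDist (e ⟨a, ha⟩) (e ⟨b, hb⟩)) := by
  classical
  obtain ⟨I, u, hI, hS, hadj⟩ := hF
  let φ : I ≃ Fin d := I.equivFinOfCardEq hI
  have out : ∀ x ∈ G.verts, ∀ i, i ∉ I → x i = u i := fun x hx => (hS x).1 hx
  let F : G.verts ≃ (Fin d → Bool) := 
    { toFun := fun x k => x.1 (φ.symm k).1
      invFun := fun y => ⟨fun i => if h : i ∈ I then y (φ ⟨i, h⟩) else u i, by
        rw [hS]; intro i hi; simp [hi]⟩
      left_inv := by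
        intro x
        apply Subtype.ext
        funext i
        by_cases hi : i ∈ I
        · simp [hi]
        · simp [hi, out x.1 x.2 i hi]
      right_inv := by
        intro y
        funext k
        simp }
  have Fa : ∀ x k, F x k = x.1 (φ.symm k).1 := fun x k => rfl
  have Ffl : ∀ (x y : G.verts) k, y.1 = fl x.1 (φ.symm k).1 → F y = fl (F x) k := by
    intro x y k hxy
    funext m
    rw [Fa, hxy]
    by_cases hm : m = k
    · subst hm; rw [fl_same, fl_same, Fa]
    · rw [fl_ne hm, fl_ne, Fa]
      intro hh; exact hm (φ.symm.injective (Subtype.ext hh))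
  refine ⟨⟨F, ?_⟩, ?_⟩
  · intro x y
    rw [hyp_adj]
    constructor
    · rintro ⟨k, hk⟩
      have h1 := hadj x.1 x.2 (φ.symm k).1 (φ.symm k).2
      have h2 : fl x.1 (φ.symm k).1 ∈ G.verts := G.edge_vert (SimpleGraph.Subgraph.Adj.symm h1)
      have h3 := Ffl x ⟨_, h2⟩ k rfl
      have h4 : y = ⟨_, h2⟩ := F.injective (hk.trans h3.symm)
      rw [h4]; exact h1
    · intro h
      have h' : G.Adj x.1 y.1 := h
      obtain ⟨i, hi⟩ := cub_coe x.1 y.1 h'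
      have hiI : i ∈ I := by
        by_contra hh
        have h1 := out y.1 y.2 i hh
        have h2 := out x.1 x.2 i hh
        rw [hi, fl_same, h2] at h1; simp at h1
      refine ⟨φ ⟨i, hiI⟩, Ffl x y _ ?_⟩
      simpa using hi
  · have : hammingDist (F ⟨a, ha⟩) (F ⟨b, hb⟩) = hammingDist a b := by
      unfold hammingDist
      rw [← Finset.card_map (φ.symm.toEmbedding.trans (Function.Embedding.subtype _))]
      congr 1
      ext i
      simp only [Finset.mem_map, Finset.mem_filter, Finset.mem_univ, true_and]
      constructor
      · rintro ⟨k, hk, rfl⟩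
        exact hk
      · intro hi
        have hiI : i ∈ I := by
          by_contra hh
          exact hi ((out a ha i hh).trans (out b hb i hh).symm)
        refine ⟨φ ⟨i, hiI⟩, ?_, by simp⟩
        rw [Fa, Fa]; simpa using hi
    change Even (hammingDist (F ⟨a, ha⟩) (F ⟨b, hb⟩))
    rw [this, even_iff]; exact hp
end
end HC

theorem hypercube_twoConnected_path_tight (n d : ℕ) (G : (hypercube n).Subgraph)
    (h2 : TwoConnected G.coe)
    (a b : Fin n → Bool) (ha : a ∈ G.verts) (hb : b ∈ G.verts) (hab : a ≠ b)
    (hdeg : ∀ z ∈ G.verts, z ≠ a → z ≠ b → d ≤ (G.neighborSet z).ncard)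
    (hnot : ¬ ∃ e : G.coe ≃g hypercube d,
      Even (hammingDist (e ⟨a, ha⟩) (e ⟨b, hb⟩))) :
    ∃ p : G.coe.Walk ⟨a, ha⟩ ⟨b, hb⟩, p.IsPath ∧ 2 ^ d - 1 ≤ p.length := by
  have hch := HC.ch_of h2 ha hb hab
  have hcard : 3 ≤ G.verts.ncard := by
    obtain ⟨x, y, z, hxy, hxz, hyz⟩ := h2.1
    have : ({x.1, y.1, z.1} : Set (Fin n → Bool)) ⊆ G.verts := by
      rintro q (rfl | rfl | rfl)
      · exact x.2
      · exact y.2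
      · exact z.2
    have h3 := Set.ncard_le_ncard this (Set.toFinite _)
    rw [Set.ncard_eq_three.2 ⟨x.1, y.1, z.1, fun h => hxy (Subtype.ext h), fun h => hxz (Subtype.ext h), fun h => hyz (Subtype.ext h), rfl⟩] at h3
    exact h3
  have hdg : ∀ z ∈ G.verts, z ≠ a → z ≠ b → d ≤ HC.deg G.spanningCoe G.verts z := by
    intro z hz hza hzb
    refine (hdeg z hz hza hzb).trans (Set.ncard_le_ncard ?_ (Set.toFinite _))
    intro y hy
    have hy' : G.Adj z y := hy
    exact ⟨G.edge_vert hy'.symm, hy'⟩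
  apply HC.LP.toWalk (k := 2 ^ d - 1)
  by_cases hd : 2 ≤ d
  · refine (HC.TT_all HC.cub_coe d hd _ _ _ ⟨ha, hb, hab, hcard, hch, hdg⟩).2 ?_ ?_
    · rintro ⟨hF, hp⟩
      exact hnot (HC.iso_of_full ha hb hF hp)
    · rintro ⟨rfl, h3⟩
      obtain ⟨z, hz, hza, hzb⟩ := HC.exists_third hcard a b
      have hall : ∀ y ∈ G.verts, y = a ∨ y = b ∨ y = z := by
        have hsub : ({a, b, z} : Set (Fin n → Bool)) ⊆ G.verts := by
          rintro q (rfl | rfl | rfl) <;> assumption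
        have := Set.eq_of_subset_of_ncard_le hsub (by
          rw [h3, Set.ncard_eq_three.2 ⟨a, b, z, hab, hza.symm, hzb.symm, rfl⟩]) (Set.toFinite _)
        intro y hy
        rw [← this] at hy
        simpa using hy
      have e1 : G.spanningCoe.Adj a b := by
        obtain ⟨x, hx, y, hy, hyA, _, hyz, e1⟩ := HC.del_cross h2 hz ha hb hza.symm hzb.symm {a} rfl (fun hh => hab hh.symm)
        rcases hall y hy with h | h | h
        · exact absurd h hyA
        · rw [← h, ← (hx : x = a)]; exact e1
        · exact absurd h hyz
      have hz2 := hdg z hz hza hzb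
      have e2 : G.spanningCoe.Adj z a := by
        obtain ⟨y, hy, hyb, e2⟩ := HC.deg_two hz2 b
        rcases hall y hy with h | h | h
        · exact h ▸ e2
        · exact absurd h hyb
        · exact absurd h.symm e2.ne
      have e3 : G.spanningCoe.Adj z b := by
        obtain ⟨y, hy, hya, e3⟩ := HC.deg_two hz2 a
        rcases hall y hy with h | h | h
        · exact absurd h hya
        · exact h ▸ e3
        · exact absurd h.symm e3.ne
      exact HC.no_tri HC.cub_coe e2 e1 e3
  · have h1 := (HC.conn_of_ch hch ha hb hcard a ha b hb).one hab
    refine h1.le ?_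
    have : d = 0 ∨ d = 1 := by omega
    rcases this with rfl | rfl <;> norm_num
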